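/- Let q be an odd prime power, d ≥ 4, t ∈ F_q nonzero, E ⊆ F_q^d. For fixed distinct y, z ∈ E, the number of tuples (x^1, ..., x^d) of points in E, each at distance t from both y and z, pairwise distinct, with {x^1,...,x^d} affinely dependent, is at most k_{(y,z)}^{d−1} · 2q^{d−3}, where k_{(y,z)} is the number of common poles of y and z in E. -/

import Mathlib

namespace ADT
open Module
set_option linter.unusedVariables false
set_option linter.unusedSectionVars false

section quad
variable {F : Type*} [Field F] [Fintype F]

def IsQuad {U : Type*} [AddCommGroup U] [Module F U] (g : U → F) : Prop :=
  ∃ (B : U →ₗ[F] U →ₗ[F] F) (L : U →ₗ[F] F) (c : F),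
    (∀ u v, B u v = B v u) ∧ ∀ u, g u = B u u + L u + c

theorem quad_split {U : Type*} [AddCommGroup U] [Module F U] [FiniteDimensional F U]
    (h2 : (2 : F) ≠ 0) {g : U → F} (hg : IsQuad g) :
    (∃ (L : U →ₗ[F] F) (c : F), ∀ u, g u = L u + c) ∨
    ∃ (a : F) (W : Submodule F U) (φ : U →ₗ[F] F) (c0 : F) (π : U →ₗ[F] W) (g1 : W → F),
      a ≠ 0 ∧ IsQuad g1 ∧ Function.Bijective (fun u => ((φ u + c0, π u) : F × W)) ∧
      ∀ u, g u = a * (φ u + c0) ^ 2 + g1 (π u) := by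
  obtain ⟨B, L, c, hB, hgu⟩ := hg
  by_cases h : ∀ e, B e e = 0
  · left
    exact ⟨L, c, fun u => by rw [hgu, h, zero_add]⟩
  · right
    push Not at h
    obtain ⟨e, he⟩ := h
    set a := B e e with ha
    let φ : U →ₗ[F] F := a⁻¹ • B e
    have hφe : φ e = 1 := by simp [φ, ← ha, he]
    let W := LinearMap.ker φ
    let π : U →ₗ[F] W := LinearMap.codRestrict W (LinearMap.id - (φ.smulRight e)) (by
      intro u
      simp [W, hφe])
    have hπ : ∀ u, ((π u : W) : U) = u - φ u • e := fun u => rfl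
    have hBe : ∀ w : W, B e w = 0 := by
      intro w
      have := w.2
      simp only [W, LinearMap.mem_ker, φ, LinearMap.smul_apply, smul_eq_mul] at this
      rcases mul_eq_zero.1 this with h | h
      · exact absurd h (inv_ne_zero he)
      · exact h
    refine ⟨a, W, φ, L e / (2 * a), π,
      fun w => B w w + L w + (c - (L e) ^ 2 / (4 * a)), he, ?_, ?_, ?_⟩
    · exact ⟨(B.domRestrict₁₂ W W), L.comp W.subtype, _, fun u v => hB _ _, fun u => rfl⟩
    · constructor
      · intro u v huv
        simp only [Prod.mk.injEq, add_left_inj] at huv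
        have h1 := congrArg (Subtype.val) huv.2
        rw [hπ, hπ, huv.1] at h1
        simpa using h1
      · rintro ⟨s, w⟩
        have hw : φ w = 0 := w.2
        refine ⟨(s - L e / (2 * a)) • e + w, ?_⟩
        simp only [Prod.mk.injEq]
        constructor
        · simp [hφe, hw]
        · apply Subtype.ext
          rw [hπ]
          simp [hφe, hw]
    · intro u
      have hu : u = φ u • e + (π u : U) := by rw [hπ]; simp
      have h1 := hBe (π u)
      have h1' : B (π u) e = 0 := by rw [hB]; exact h1
      rw [hgu]
      have e1 : B u u = φ u ^ 2 * a + B (π u) (π u) := by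
        conv_lhs => rw [hu]
        simp only [map_add, map_smul, LinearMap.add_apply, LinearMap.smul_apply, smul_eq_mul, h1, h1']
        rw [ha]; ring
      have e2 : L u = φ u * L e + L (π u) := by
        conv_lhs => rw [hu]
        simp
      rw [e1, e2]
      have h4 : (4 : F) ≠ 0 := by
        have : (4 : F) = 2 * 2 := by norm_num
        rw [this]; exact mul_ne_zero h2 h2
      field_simp
      ring

/-- number of zeros -/
noncomputable def zc {U : Type*} (g : U → F) : ℕ := Nat.card {u : U // g u = 0}

theorem zc_affine {U : Type*} [AddCommGroup U] [Module F U] [Finite U]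
    (L : U →ₗ[F] F) (c : F) (hL : L ≠ 0) :
    Fintype.card F * zc (fun u => L u + c) = Nat.card U := by
  classical
  obtain ⟨e, he⟩ : ∃ e, L e ≠ 0 := by
    by_contra h; push Not at h; exact hL (LinearMap.ext h)
  rw [zc, ← Nat.card_eq_fintype_card, ← Nat.card_prod]
  refine Nat.card_congr ⟨fun p => (p.1 / L e) • e + p.2.1,
    fun u => (L u + c, ⟨u - ((L u + c) / L e) • e, ?_⟩), ?_, ?_⟩
  · simp [he]
  · rintro ⟨s, u, hu⟩
    have : L ((s / L e) • e + u) + c = s := by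
      simp [he]; linear_combination hu
    simp only [Prod.mk.injEq, this, true_and]
    apply Subtype.ext; simp
  · intro u; simp

theorem roots_le_two (h2 : (2 : F) ≠ 0) (a c c0 : F) (ha : a ≠ 0) :
    Nat.card {s : F // a * s ^ 2 + c = 0} ≤ 2 := by
  classical
  by_cases h : ∃ s0, a * s0 ^ 2 + c = 0
  · obtain ⟨s0, h0⟩ := h
    have : Nat.card {s : F // a * s ^ 2 + c = 0} ≤ Nat.card ({s0, -s0} : Finset F) := by
      refine Nat.card_le_card_of_injective (fun s => ⟨s.1, ?_⟩) ?_
      · have h1 := s.2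
        have : a * ((s.1 - s0) * (s.1 + s0)) = 0 := by linear_combination h1 - h0
        rcases mul_eq_zero.1 this with h | h
        · exact absurd h ha
        rcases mul_eq_zero.1 h with h | h
        · simp [sub_eq_zero.1 h]
        · simp [eq_neg_of_add_eq_zero_left h]
      · intro s s' h; apply Subtype.ext; simpa using h
    refine this.trans ?_
    rw [Nat.card_eq_fintype_card, Fintype.card_coe]
    exact Finset.card_le_two
  · push Not at h
    have : IsEmpty {s : F // a * s ^ 2 + c = 0} := ⟨fun s => h s.1 s.2⟩
    simp

/-- fibre counting: if f : A → B has fibres bounded. -/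
theorem card_le_fib {A B : Type*} [Finite A] [Fintype B] (f : A → B) (n : B → ℕ)
    (h : ∀ b, Nat.card {a // f a = b} ≤ n b) : Nat.card A ≤ ∑ b, n b := by
  classical
  have := Nat.card_congr (Equiv.sigmaFiberEquiv f).symm
  rw [this, Nat.card_sigma]
  exact Finset.sum_le_sum fun b _ => h b

theorem sz {U : Type*} [AddCommGroup U] [Module F U] [Finite U]
    (h2 : (2 : F) ≠ 0) {g : U → F} (hg : IsQuad g) (hne : ∃ u, g u ≠ 0) :
    Fintype.card F * zc g ≤ 2 * Nat.card U := by
  classical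
  have : FiniteDimensional F U := Module.Finite.of_finite
  rcases quad_split h2 hg with ⟨L, c, h⟩ | ⟨a, W, φ, c0, π, g1, ha, hg1, hbij, h⟩
  · have hgg : g = fun u => L u + c := funext h
    by_cases hL : L = 0
    · obtain ⟨u, hu⟩ := hne
      have hc : c ≠ 0 := by rw [h, hL] at hu; simpa using hu
      have : IsEmpty {u : U // g u = 0} := ⟨fun u => by
        have := u.2; rw [h, hL] at this; simp at this; exact hc this⟩
      simp [zc]
    · rw [hgg, zc_affine L c hL]; omega
  · have hcU : Nat.card U = Fintype.card F * Nat.card W := by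
      rw [Nat.card_congr (Equiv.ofBijective _ hbij), Nat.card_prod, Nat.card_eq_fintype_card]
    have : Fintype W := Fintype.ofFinite W
    have key : zc g ≤ ∑ w : W, 2 := by
      refine card_le_fib (fun u : {u : U // g u = 0} => π u.1) _ ?_
      intro w
      refine le_trans ?_ (roots_le_two h2 a (g1 w) 0 ha)
      refine Nat.card_le_card_of_injective (fun u => ⟨φ u.1.1 + c0, ?_⟩) ?_
      · have h1 := u.1.2
        have h3 := u.2
        rw [h] at h1
        simp only [h3] at h1; exact h1
      · intro u v huv
        apply Subtype.ext; apply Subtype.ext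
        apply hbij.1
        simp only [Subtype.mk.injEq] at huv
        simp only [huv, Prod.mk.injEq, true_and]
        exact u.2.trans v.2.symm
    rw [Finset.sum_const, smul_eq_mul, Finset.card_univ, ← Nat.card_eq_fintype_card] at key
    rw [hcU]
    nlinarith

theorem conic1 (h2 : (2 : F) ≠ 0) (a b γ : F) (ha : a ≠ 0) (hb : b ≠ 0)
    (hn : ∀ l : F, a * l ^ 2 + b ≠ 0) :
    Nat.card {p : F × F // a * p.1 ^ 2 + b * p.2 ^ 2 = γ} ≤ Fintype.card F + 1 := by
  classical
  have hn' : ∀ m : F, a + b * m ^ 2 ≠ 0 := by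
    intro m hm
    by_cases h0 : m = 0
    · rw [h0] at hm; simp at hm; exact ha hm
    · apply hn (m⁻¹); field_simp; linear_combination hm
  by_cases hex : ∃ p : F × F, a * p.1 ^ 2 + b * p.2 ^ 2 = γ
  swap
  · have : IsEmpty {p : F × F // a * p.1 ^ 2 + b * p.2 ^ 2 = γ} := ⟨fun s => hex ⟨s.1, s.2⟩⟩
    simp
  obtain ⟨⟨s0, r0⟩, h0⟩ := hex
  simp only at h0
  have hslope : ∀ s r : F, a * s ^ 2 + b * r ^ 2 = γ → s ≠ s0 →
      s * (a + b * ((r - r0) / (s - s0)) ^ 2) =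
        -a * s0 - 2 * b * ((r - r0) / (s - s0)) * r0 + b * ((r - r0) / (s - s0)) ^ 2 * s0 := by
    intro s r h hs
    have hs' : s - s0 ≠ 0 := sub_ne_zero.2 hs
    set m := (r - r0) / (s - s0) with hm
    have hr : r = r0 + m * (s - s0) := by rw [hm]; field_simp; ring
    rw [hr] at h
    apply mul_left_cancel₀ hs'
    linear_combination h - h0
  -- map to Option F
  rw [← Nat.card_eq_fintype_card, ← Finite.card_option]
  refine Nat.card_le_card_of_injective
    (fun p => if p.1.1 = s0 then
        (if p.1.2 = r0 then none else some (-(a * s0) / (b * r0)))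
      else some ((p.1.2 - r0) / (p.1.1 - s0))) ?_
  -- tangent direction is missed
  have htan : ∀ s r : F, a * s ^ 2 + b * r ^ 2 = γ → s ≠ s0 → r0 ≠ 0 →
      -(a * s0) / (b * r0) ≠ (r - r0) / (s - s0) := by
    intro s r h hs hr0 hm
    have := hslope s r h hs
    rw [← hm] at this
    apply hs
    apply mul_right_cancel₀ (hn' (-(a * s0) / (b * r0)))
    rw [this]; field_simp; ring
  have hss : ∀ r, a * s0 ^ 2 + b * r ^ 2 = γ → r ≠ r0 → r = - r0 ∧ r0 ≠ 0 := by
    intro r h hr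
    have : b * ((r - r0) * (r + r0)) = 0 := by linear_combination h - h0
    rcases mul_eq_zero.1 this with h | h
    · exact absurd h hb
    rcases mul_eq_zero.1 h with h | h
    · exact absurd (sub_eq_zero.1 h) hr
    · have h3 := eq_neg_of_add_eq_zero_left h
      refine ⟨h3, fun h4 => hr ?_⟩
      rw [h3, h4]; simp
  rintro ⟨⟨s, r⟩, h⟩ ⟨⟨s', r'⟩, h'⟩ heq
  simp only at h h' heq
  apply Subtype.ext
  simp only [Prod.mk.injEq]
  split_ifs at heq with c1 c2 c3 c4 c3 c4 c5 c6
  · exact ⟨c1.trans c3.symm, c2.trans c4.symm⟩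
  · subst c1; subst c3
    exact ⟨rfl, (hss r h c2).1.trans (hss r' h' c4).1.symm⟩
  · subst c1
    exact absurd (Option.some.inj heq) (htan s' r' h' c3 (hss r h c2).2)
  · subst c5
    exact absurd (Option.some.inj heq).symm (htan s r h c1 (hss r' h' c6).2)
  · have hm := Option.some.inj heq
    have e1 := hslope s r h c1
    have e2 := hslope s' r' h' c5
    rw [← hm] at e2
    have : s = s' := mul_right_cancel₀ (hn' _) (e1.trans e2.symm)
    subst this
    refine ⟨rfl, ?_⟩
    have := sub_ne_zero.2 c1
    field_simp at hm
    simpa using hm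

open Classical in
theorem conic2 (h2 : (2 : F) ≠ 0) (a l γ : F) (ha : a ≠ 0) (hl : l ≠ 0) :
    Nat.card {p : F × F // a * p.1 ^ 2 - a * l ^ 2 * p.2 ^ 2 = γ} + 1 ≤
      Fintype.card F + (if γ = 0 then Fintype.card F else 0) := by
  have hq : 1 ≤ Fintype.card F := Fintype.card_pos
  have hinj : ∀ s r s' r' : F, s - l * r = s' - l * r' → s + l * r = s' + l * r' → s = s' ∧ r = r' := by
    intro s r s' r' e1 e2
    have hs : s = s' := by
      apply mul_left_cancel₀ h2; linear_combination e1 + e2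
    refine ⟨hs, ?_⟩
    apply mul_left_cancel₀ hl; rw [hs] at e1; linear_combination -e1
  split_ifs with h
  · subst h
    have : Nat.card {p : F × F // a * p.1 ^ 2 - a * l ^ 2 * p.2 ^ 2 = 0} ≤
        Nat.card (F ⊕ {x : F // x ≠ 0}) := by
      refine Nat.card_le_card_of_injective (fun p => if h : p.1.1 - l * p.1.2 = 0 then
        Sum.inl (p.1.1 + l * p.1.2) else Sum.inr ⟨_, h⟩) ?_
      have hz : ∀ s r : F, a * s ^ 2 - a * l ^ 2 * r ^ 2 = 0 → s - l * r ≠ 0 → s + l * r = 0 := by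
        intro s r h h'
        have : (a * (s - l * r)) * (s + l * r) = 0 := by linear_combination h
        exact (mul_eq_zero.1 this).resolve_left (mul_ne_zero ha h')
      rintro ⟨⟨s, r⟩, h⟩ ⟨⟨s', r'⟩, h'⟩ heq
      simp only at h h' heq
      apply Subtype.ext
      simp only [Prod.mk.injEq]
      split_ifs at heq with c1 c2 c2
      · exact hinj _ _ _ _ (c1.trans c2.symm) (Sum.inl.inj heq)
      · have := congrArg Subtype.val (Sum.inr.inj heq)
        exact hinj _ _ _ _ this ((hz s r h c1).trans (hz s' r' h' c2).symm)
    rw [Nat.card_sum, Nat.card_eq_fintype_card (α := F), Nat.card_eq_fintype_card (α := {x : F // x ≠ 0}),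
      Fintype.card_subtype_compl, Fintype.card_subtype_eq] at this
    omega
  · have : Nat.card {p : F × F // a * p.1 ^ 2 - a * l ^ 2 * p.2 ^ 2 = γ} ≤
        Nat.card ({x : F // x ≠ 0}) := by
      have hz : ∀ s r : F, a * s ^ 2 - a * l ^ 2 * r ^ 2 = γ → (a * (s - l * r)) * (s + l * r) = γ := by
        intro s r h
        linear_combination h
      refine Nat.card_le_card_of_injective (fun p => ⟨p.1.1 - l * p.1.2, ?_⟩) ?_
      · intro h0
        have := hz _ _ p.2
        rw [h0] at this; simp at this; exact h this.symm
      · rintro ⟨⟨s, r⟩, h1⟩ ⟨⟨s', r'⟩, h1'⟩ heq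
        simp only [Subtype.mk.injEq] at h1 h1' heq
        apply Subtype.ext
        simp only [Prod.mk.injEq]
        refine hinj _ _ _ _ heq ?_
        have e1 := hz s r h1
        have e2 := hz s' r' h1'
        rw [← heq] at e2
        apply mul_left_cancel₀ _ (e1.trans e2.symm)
        intro h0; rw [h0] at e1; simp at e1; exact h e1.symm
    rw [Nat.card_eq_fintype_card (α := {x : F // x ≠ 0}),
      Fintype.card_subtype_compl, Fintype.card_subtype_eq] at this
    omega

theorem dich {U : Type*} [AddCommGroup U] [Module F U] [Finite U]
    (h2 : (2 : F) ≠ 0) {g : U → F} (hg : IsQuad g) :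
    Fintype.card F ^ 2 * zc g ≤ (Fintype.card F + 1) * Nat.card U ∨
    ∃ (L L' : U →ₗ[F] F) (c c' : F), ∀ u, g u = (L u + c) * (L' u + c') := by
  classical
  have hfd : FiniteDimensional F U := Module.Finite.of_finite
  have hq : 1 ≤ Fintype.card F := Fintype.card_pos
  rcases quad_split h2 hg with ⟨L, c, h⟩ | ⟨a, W, φ, c0, π, g1, ha, hg1, hbij, h⟩
  · right; exact ⟨L, 0, c, 1, fun u => by simp [h]⟩
  have hcU : Nat.card U = Fintype.card F * Nat.card W := by
    rw [Nat.card_congr (Equiv.ofBijective _ hbij), Nat.card_prod, Nat.card_eq_fintype_card]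
  have : Fintype W := Fintype.ofFinite W
  rcases quad_split h2 hg1 with ⟨L, c, h1⟩ | ⟨b, W', φ', c0', π', g2, hb, hg2, hbij', h1⟩
  · by_cases hL : L = 0
    · by_cases hs : ∃ s0, a * s0 ^ 2 + c = 0
      · obtain ⟨s0, hs0⟩ := hs
        right
        refine ⟨a • φ, φ, a * (c0 - s0), c0 + s0, fun u => ?_⟩
        rw [h, h1, hL]
        simp
        linear_combination hs0
      · left
        have : IsEmpty {u : U // g u = 0} := ⟨fun u => by
          have hu := u.2
          rw [h, h1, hL] at hu
          apply hs
          refine ⟨φ u.1 + c0, ?_⟩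
          simpa using hu⟩
        simp [zc]
    · left
      have key : zc g ≤ ∑ s : F, Nat.card {w : W // L w + (c + a * s ^ 2) = 0} := by
        refine card_le_fib (fun u : {u : U // g u = 0} => φ u.1 + c0) _ ?_
        intro s
        refine Nat.card_le_card_of_injective (fun u => ⟨π u.1.1, ?_⟩) ?_
        · have e1 := u.1.2
          have e2 := u.2
          rw [h, h1] at e1
          simp only [e2] at e1
          linear_combination e1
        · intro u v huv
          apply Subtype.ext; apply Subtype.ext
          apply hbij.1
          simp only [Subtype.mk.injEq] at huv
          simp only [huv, Prod.mk.injEq, and_true]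
          exact u.2.trans v.2.symm
      have hz : ∀ s : F, Fintype.card F * Nat.card {w : W // L w + (c + a * s ^ 2) = 0} = Nat.card W :=
        fun s => zc_affine L _ hL
      have : Fintype.card F * zc g ≤ Nat.card U := by
        calc _ ≤ Fintype.card F * ∑ s : F, Nat.card {w : W // L w + (c + a * s ^ 2) = 0} :=
              Nat.mul_le_mul_left _ key
          _ = Nat.card U := by
              rw [Finset.mul_sum, Finset.sum_congr rfl (fun s _ => hz s)]
              simp [hcU]
      nlinarith
  have hcW : Nat.card W = Fintype.card F * Nat.card W' := by
    rw [Nat.card_congr (Equiv.ofBijective _ hbij'), Nat.card_prod, Nat.card_eq_fintype_card]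
  have : Fintype W' := Fintype.ofFinite W'
  have key : zc g ≤ ∑ w : W', Nat.card {p : F × F // a * p.1 ^ 2 + b * p.2 ^ 2 = - g2 w} := by
    refine card_le_fib (fun u : {u : U // g u = 0} => π' (π u.1)) _ ?_
    intro w
    refine Nat.card_le_card_of_injective (fun u => ⟨(φ u.1.1 + c0, φ' (π u.1.1) + c0'), ?_⟩) ?_
    · have e1 := u.1.2
      have e2 := u.2
      rw [h, h1] at e1
      simp only [e2] at e1
      simp only
      linear_combination e1
    · intro u v huv
      apply Subtype.ext; apply Subtype.ext
      simp only [Subtype.mk.injEq, Prod.mk.injEq] at huv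
      apply hbij.1
      simp only [Prod.mk.injEq]
      refine ⟨huv.1, ?_⟩
      apply hbij'.1
      simp only [Prod.mk.injEq]
      exact ⟨huv.2, u.2.trans v.2.symm⟩
  by_cases hl : ∃ l, a * l ^ 2 + b = 0
  · obtain ⟨l, hl⟩ := hl
    have hl0 : l ≠ 0 := by rintro rfl; simp at hl; exact hb hl
    have hbl : b = - (a * l ^ 2) := by linear_combination hl
    by_cases hg20 : ∃ w, g2 w ≠ 0
    · left
      have hsz := sz h2 hg2 hg20
      have key2 : zc g + Nat.card W' ≤ Fintype.card F * Nat.card W' + Fintype.card F * zc g2 := by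
        calc zc g + Nat.card W' ≤ ∑ w : W', (Nat.card {p : F × F // a * p.1 ^ 2 + b * p.2 ^ 2 = - g2 w} + 1) := by
              rw [Finset.sum_add_distrib, Finset.sum_const, Finset.card_univ, smul_eq_mul, mul_one,
                ← Nat.card_eq_fintype_card]
              omega
          _ ≤ ∑ w : W', (Fintype.card F + (if g2 w = 0 then Fintype.card F else 0)) := by
              refine Finset.sum_le_sum fun w _ => ?_
              have := conic2 h2 a l (- g2 w) ha hl0
              simp only [neg_eq_zero] at this
              rw [hbl]
              simp only [neg_mul, ← sub_eq_add_neg]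
              exact this
          _ = _ := by
              have e1 : zc g2 = (Finset.univ.filter (fun w => g2 w = 0)).card := by
                rw [zc, Nat.card_eq_fintype_card, Fintype.card_subtype]
              have e2 : Nat.card W' = (Finset.univ : Finset W').card := by
                rw [Nat.card_eq_fintype_card, Finset.card_univ]
              rw [Finset.sum_add_distrib, Finset.sum_const, smul_eq_mul,
                ← Finset.sum_filter, Finset.sum_const, smul_eq_mul, e1, e2]
              ring
      rw [hcU, hcW]
      have : zc g ≤ (Fintype.card F + 1) * Nat.card W' := by nlinarith
      calc _ ≤ Fintype.card F ^ 2 * ((Fintype.card F + 1) * Nat.card W') := Nat.mul_le_mul_left _ this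
        _ = _ := by ring
    · right
      push Not at hg20
      refine ⟨a • (φ - l • (φ'.comp π)), φ + l • (φ'.comp π), a * (c0 - l * c0'), c0 + l * c0', fun u => ?_⟩
      rw [h, h1, hg20, hbl]
      simp
      ring
  · left
    push Not at hl
    have key2 : zc g ≤ (Fintype.card F + 1) * Nat.card W' := by
      refine key.trans ?_
      calc _ ≤ ∑ w : W', (Fintype.card F + 1) :=
            Finset.sum_le_sum fun w _ => conic1 h2 a b _ ha hb hl
        _ = _ := by
            rw [Finset.sum_const, Finset.card_univ, smul_eq_mul, ← Nat.card_eq_fintype_card]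
            ring
    rw [hcU, hcW]
    calc _ ≤ Fintype.card F ^ 2 * ((Fintype.card F + 1) * Nat.card W') := Nat.mul_le_mul_left _ key2
      _ = _ := by ring

end quad
end ADT

namespace ADT
open Module
set_option linter.unusedVariables false
set_option linter.unusedSectionVars false

section sect
variable {F : Type*} [Field F] [Fintype F]
variable {W : Type*} [AddCommGroup W] [Module F W] [Fintype W]

open Classical in
noncomputable def cnt (K : Finset W) (S : Submodule F W) : ℕ := (K.filter (fun p => p ∈ S)).card

theorem card_slice (σ : W →ₗ[F] F) (S : Submodule F W) (a : W) (haS : a ∈ S) (ha : σ a = 1) :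
    Fintype.card F * Nat.card ↥(S ⊓ LinearMap.ker σ) = Fintype.card F ^ finrank F S := by
  have h := zc_affine (σ.domRestrict S) 0 (by
    intro h
    have := LinearMap.congr_fun h ⟨a, haS⟩
    simp [ha] at this)
  rw [Module.natCard_eq_pow_finrank (K := F), Nat.card_eq_fintype_card] at h
  rw [← h, zc]
  congr 1
  refine Nat.card_congr ⟨fun u => ⟨⟨u.1, u.2.1⟩, ?_⟩, fun u => ⟨u.1.1, u.1.2, ?_⟩, fun u => rfl, fun u => rfl⟩
  · have := u.2.2; simp at this; simpa using this
  · have := u.2; simp at this; simpa using this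

variable (σ : W →ₗ[F] F) (B : W →ₗ[F] W →ₗ[F] F) (hB : ∀ u v, B u v = B v u)
  (K : Finset W) (hσ : ∀ p ∈ K, σ p = 1) (hQ : ∀ p ∈ K, B p p = 0)

def gS (B : W →ₗ[F] W →ₗ[F] F) (S : Submodule F W) (a : W) : S → F := fun u => B (a + u) (a + u)

theorem gS_quad (hB : ∀ u v, B u v = B v u) (S : Submodule F W) (a : W) : IsQuad (gS B S a) := by
  refine ⟨B.domRestrict₁₂ S S, (2 : F) • (B a).domRestrict S, B a a, fun u v => hB _ _, fun u => ?_⟩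
  have e : (B.domRestrict₁₂ S S) u u = B u u := rfl
  rw [e]
  simp [gS, hB u.1 a]
  ring

include hσ in
theorem cnt_le_slice (S : Submodule F W) (a : W) (haS : a ∈ S) (ha : σ a = 1) :
    cnt K S ≤ Nat.card ↥(S ⊓ LinearMap.ker σ) := by
  classical
  rw [cnt, ← Fintype.card_coe, ← Nat.card_eq_fintype_card]
  refine Nat.card_le_card_of_injective (fun p => ⟨p.1 - a, ?_⟩) ?_
  · have := p.2
    rw [Finset.mem_filter] at this
    refine ⟨S.sub_mem this.2 haS, ?_⟩
    simp [ha, hσ _ this.1]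
  · intro p p' h
    apply Subtype.ext
    have h' := congrArg Subtype.val h
    simpa using h'

include hσ hQ in
theorem cnt_le_zc (S : Submodule F W) (a : W) (haS : a ∈ S) (ha : σ a = 1) :
    cnt K S ≤ zc (gS B (S ⊓ LinearMap.ker σ) a) := by
  classical
  rw [cnt, ← Fintype.card_coe, ← Nat.card_eq_fintype_card]
  refine Nat.card_le_card_of_injective (fun p => ⟨⟨p.1 - a, ?_⟩, ?_⟩) ?_
  · have := p.2
    rw [Finset.mem_filter] at this
    refine ⟨S.sub_mem this.2 haS, ?_⟩
    simp [ha, hσ _ this.1]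
  · have := p.2
    rw [Finset.mem_filter] at this
    have h := hQ _ this.1
    simp only [gS]
    rwa [add_sub_cancel]
  · intro p p' h
    apply Subtype.ext
    have h' := congrArg (fun x => x.1.1) h
    simpa using h'

include hσ in
theorem cnt1 (S : Submodule F W) (a : W) (haS : a ∈ S) (ha : σ a = 1) :
    Fintype.card F * cnt K S ≤ Fintype.card F ^ finrank F S := by
  rw [← card_slice σ S a haS ha]
  exact Nat.mul_le_mul_left _ (cnt_le_slice σ K hσ S a haS ha)

include hB hσ hQ in
theorem cnt2 (h2 : (2 : F) ≠ 0) (S : Submodule F W) (a : W) (haS : a ∈ S) (ha : σ a = 1)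
    (hne : ∃ v ∈ S, σ v = 1 ∧ B v v ≠ 0) :
    Fintype.card F ^ 2 * cnt K S ≤ 2 * Fintype.card F ^ finrank F S := by
  rw [← card_slice σ S a haS ha]
  obtain ⟨v, hvS, hv, hv0⟩ := hne
  have := sz h2 (gS_quad B hB (S ⊓ LinearMap.ker σ) a) ⟨⟨v - a, S.sub_mem hvS haS, by simp [hv, ha]⟩, by
    simp only [gS]; rwa [add_sub_cancel]⟩
  have h1 := cnt_le_zc σ B K hσ hQ S a haS ha
  calc _ = Fintype.card F * (Fintype.card F * cnt K S) := by ring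
    _ ≤ Fintype.card F * (2 * Nat.card ↥(S ⊓ LinearMap.ker σ)) := by
      apply Nat.mul_le_mul_left
      exact (Nat.mul_le_mul_left _ h1).trans this
    _ = _ := by ring

include hB hσ hQ in
theorem cnt3 (h2 : (2 : F) ≠ 0) (S : Submodule F W) (a : W) (haS : a ∈ S) (ha : σ a = 1) :
    Fintype.card F ^ 3 * cnt K S ≤ (Fintype.card F + 1) * Fintype.card F ^ finrank F S ∨
    ∃ l l' : S →ₗ[F] F, ∀ v : S, σ v = 1 → B v v = l v * l' v := by
  rw [← card_slice σ S a haS ha]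
  rcases dich h2 (gS_quad B hB (S ⊓ LinearMap.ker σ) a) with h | ⟨L, L', c, c', h⟩
  · left
    have h1 := cnt_le_zc σ B K hσ hQ S a haS ha
    calc _ = Fintype.card F * (Fintype.card F ^ 2 * cnt K S) := by ring
      _ ≤ Fintype.card F * ((Fintype.card F + 1) * Nat.card ↥(S ⊓ LinearMap.ker σ)) := by
        apply Nat.mul_le_mul_left
        exact (Nat.mul_le_mul_left _ h1).trans h
      _ = _ := by ring
  · right
    let ρ : S →ₗ[F] ↥(S ⊓ LinearMap.ker σ) :=
      LinearMap.codRestrict _ (S.subtype - (σ.domRestrict S).smulRight a) (by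
        intro v
        refine ⟨?_, ?_⟩
        · simp only [LinearMap.sub_apply, Submodule.subtype_apply, LinearMap.smulRight_apply]
          exact S.sub_mem v.2 (S.smul_mem _ haS)
        · simp [ha])
    refine ⟨L.comp ρ + c • σ.domRestrict S, L'.comp ρ + c' • σ.domRestrict S, fun v hv => ?_⟩
    have e : ((ρ v : ↥(S ⊓ LinearMap.ker σ)) : W) = v - a := by
      change (v : W) - σ v • a = v - a
      rw [hv, one_smul]
    have := h (ρ v)
    simp only [gS, e, add_sub_cancel] at this
    rw [this]
    simp [hv]

include hB hσ hQ in
/-- three pairwise non-adjacent points force a small section -/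
theorem cnt_indep (h2 : (2 : F) ≠ 0) (S : Submodule F W) (p1 p2 p3 : W)
    (h1S : p1 ∈ S) (h2S : p2 ∈ S) (h3S : p3 ∈ S) (h1 : p1 ∈ K) (h2' : p2 ∈ K) (h3 : p3 ∈ K)
    (h12 : B p1 p2 ≠ 0) (h13 : B p1 p3 ≠ 0) (h23 : B p2 p3 ≠ 0) :
    Fintype.card F ^ 3 * cnt K S ≤ (Fintype.card F + 1) * Fintype.card F ^ finrank F S := by
  rcases cnt3 σ B hB K hσ hQ h2 S p1 h1S (hσ _ h1) with h | ⟨l, l', h⟩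
  · exact h
  exfalso
  have key : ∀ (p p' : W) (hp : p ∈ S) (hp' : p' ∈ S), p ∈ K → p' ∈ K →
      (l ⟨p, hp⟩ = 0 ∧ l ⟨p', hp'⟩ = 0 ∨ l' ⟨p, hp⟩ = 0 ∧ l' ⟨p', hp'⟩ = 0) → B p p' = 0 := by
    intro p p' hp hp' hpK hpK' hor
    have e := h ((2 : F)⁻¹ • (⟨p, hp⟩ + ⟨p', hp'⟩)) (by
      simp [hσ _ hpK, hσ _ hpK']; rw [← two_mul, mul_inv_cancel₀ h2])
    have e0 : l ((2 : F)⁻¹ • (⟨p, hp⟩ + ⟨p', hp'⟩)) * l' ((2 : F)⁻¹ • (⟨p, hp⟩ + ⟨p', hp'⟩)) = 0 := by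
      rcases hor with ⟨a, b⟩ | ⟨a, b⟩ <;> simp only [map_smul, map_add, a, b, add_zero, smul_zero, zero_mul, mul_zero]
    rw [e0] at e
    simp [hQ _ hpK, hQ _ hpK', hB p' p] at e
    rw [← two_mul] at e
    rw [mul_inv_cancel_left₀ h2] at e
    exact (mul_eq_zero.1 e).resolve_left (inv_ne_zero h2)
  have hz : ∀ (p : W) (hp : p ∈ S), p ∈ K → l ⟨p, hp⟩ = 0 ∨ l' ⟨p, hp⟩ = 0 := by
    intro p hp hpK
    have := h ⟨p, hp⟩ (hσ _ hpK)
    simp only [hQ _ hpK] at this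
    exact mul_eq_zero.1 this.symm
  rcases hz p1 h1S h1 with a | a <;> rcases hz p2 h2S h2' with b | b <;>
    rcases hz p3 h3S h3 with c | c
  · exact h12 (key _ _ _ _ h1 h2' (Or.inl ⟨a, b⟩))
  · exact h12 (key _ _ _ _ h1 h2' (Or.inl ⟨a, b⟩))
  · exact h13 (key _ _ _ _ h1 h3 (Or.inl ⟨a, c⟩))
  · exact h23 (key _ _ _ _ h2' h3 (Or.inr ⟨b, c⟩))
  · exact h23 (key _ _ _ _ h2' h3 (Or.inl ⟨b, c⟩))
  · exact h13 (key _ _ _ _ h1 h3 (Or.inr ⟨a, c⟩))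
  · exact h12 (key _ _ _ _ h1 h2' (Or.inr ⟨a, b⟩))
  · exact h12 (key _ _ _ _ h1 h2' (Or.inr ⟨a, b⟩))

/-- no big isotropic flats -/
def NoIso (σ : W →ₗ[F] F) (B : W →ₗ[F] W →ₗ[F] F) (d : ℕ) : Prop :=
  ∀ (S : Submodule F W) (a : W), a ∈ S → σ a = 1 → (∀ v ∈ S, σ v = 1 → B v v = 0) →
    2 * finrank F S ≤ d + 1

include hB hσ hQ in
theorem cnt_noiso2 (h2 : (2 : F) ≠ 0) {d : ℕ} (hno : NoIso σ B d) (S : Submodule F W) (a : W)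
    (haS : a ∈ S) (ha : a ∈ K) (hd : d + 1 < 2 * finrank F S) :
    Fintype.card F ^ 2 * cnt K S ≤ 2 * Fintype.card F ^ finrank F S := by
  refine cnt2 σ B hB K hσ hQ h2 S a haS (hσ _ ha) ?_
  by_contra hcon
  push Not at hcon
  have := hno S a haS (hσ _ ha) hcon
  omega

include hB hσ hQ in
theorem cnt_noiso3 (h2 : (2 : F) ≠ 0) {d : ℕ} (hno : NoIso σ B d) (S : Submodule F W) (a : W)
    (haS : a ∈ S) (ha : a ∈ K) (hd : d + 3 < 2 * finrank F S) :
    Fintype.card F ^ 3 * cnt K S ≤ (Fintype.card F + 1) * Fintype.card F ^ finrank F S := by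
  rcases cnt3 σ B hB K hσ hQ h2 S a haS (hσ _ ha) with h | ⟨l, l', h⟩
  · exact h
  exfalso
  have main : ∀ l : S →ₗ[F] F, l ⟨a, haS⟩ = 0 → (∀ v : S, σ v = 1 → l v = 0 → B v v = 0) → False := by
    intro l hl hv
    have h1 := hno ((LinearMap.ker l).map S.subtype) a ⟨⟨a, haS⟩, hl, rfl⟩ (hσ _ ha) (by
      rintro _ ⟨v, hv1, rfl⟩ hv2
      exact hv v hv2 hv1)
    have h3 := LinearMap.finrank_range_add_finrank_ker l
    have h4 : finrank F (LinearMap.range l) ≤ 1 := by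
      have := Submodule.finrank_le (LinearMap.range l)
      simpa using this
    rw [Submodule.finrank_map_subtype_eq] at h1
    omega
  have := h ⟨a, haS⟩ (hσ _ ha)
  simp only [hQ _ ha] at this
  rcases mul_eq_zero.1 this.symm with h0 | h0
  · exact main l h0 fun v hv hlv => by rw [h v hv, hlv, zero_mul]
  · exact main l' h0 fun v hv hlv => by rw [h v hv, hlv, mul_zero]

end sect
end ADT

namespace ADT
open Module
set_option linter.unusedVariables false
set_option linter.unusedSectionVars false
set_option linter.unusedDecidableInType false

section comb
variable {F : Type*} [Field F] [Fintype F]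
variable {W : Type*} [AddCommGroup W] [Module F W] [Fintype W]

open Classical in
noncomputable def IndSet (F : Type*) [Field F] {W : Type*} [AddCommGroup W] [Module F W]
    (K : Finset W) (m : ℕ) : Finset (Fin m → W) :=
  (Fintype.piFinset fun _ => K).filter (fun x => LinearIndependent F x)

theorem mem_IndSet {K : Finset W} {m : ℕ} {x : Fin m → W} :
    x ∈ IndSet F K m ↔ (∀ i, x i ∈ K) ∧ LinearIndependent F x := by
  classical
  simp [IndSet, Fintype.mem_piFinset]

open Classical in
theorem ind_sum_succ {M : Type*} [AddCommMonoid M] (K : Finset W) (m : ℕ) (f : (Fin (m+1) → W) → M) :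
    ∑ y ∈ IndSet F K (m+1), f y = ∑ x ∈ IndSet F K m,
      ∑ p ∈ K.filter (fun p => p ∉ Submodule.span F (Set.range x)), f (Fin.snoc x p) := by
  rw [Finset.sum_sigma']
  refine Finset.sum_bij' (fun y _ => ⟨Fin.init y, y (Fin.last m)⟩) (fun s _ => Fin.snoc s.1 s.2) ?_ ?_ ?_ ?_ ?_
  · intro y hy
    rw [mem_IndSet] at hy
    have h := hy.2
    rw [← Fin.snoc_init_self y, linearIndependent_finSnoc] at h
    simp only [Finset.mem_sigma, mem_IndSet, Finset.mem_filter]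
    exact ⟨⟨fun i => hy.1 _, h.1⟩, hy.1 _, h.2⟩
  · rintro ⟨x, p⟩ h
    simp only [Finset.mem_sigma, mem_IndSet, Finset.mem_filter] at h ⊢
    refine ⟨fun i => ?_, linearIndependent_finSnoc.2 ⟨h.1.2, h.2.2⟩⟩
    refine Fin.lastCases ?_ (fun j => ?_) i
    · simpa using h.2.1
    · simpa using h.1.1 j
  · intro y hy
    exact Fin.snoc_init_self y
  · rintro ⟨x, p⟩ h
    simp
  · intro y hy
    simp

open Classical in
theorem card_filter_not (K : Finset W) (S : Submodule F W) :
    ((K.filter (fun p => p ∉ S)).card : ℝ) = (K.card : ℝ) - cnt K S := by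
  have := Finset.card_filter_add_card_filter_not (s := K) (fun p => p ∈ S)
  rw [cnt, ← this]; push_cast; ring

theorem ind_card_succ (K : Finset W) (m : ℕ) :
    ((IndSet F K (m+1)).card : ℝ) =
      ∑ x ∈ IndSet F K m, ((K.card : ℝ) - cnt K (Submodule.span F (Set.range x))) := by
  classical
  have := ind_sum_succ (F := F) K m (fun _ => (1 : ℝ))
  simp only [Finset.sum_const, nsmul_eq_mul, mul_one] at this
  rw [this]
  exact Finset.sum_congr rfl fun x _ => card_filter_not _ _

/-- weight of a tuple: number of extensions by two more points -/
noncomputable def wt (F : Type*) [Field F] {W : Type*} [AddCommGroup W] [Module F W] (K : Finset W) {m : ℕ} (x : Fin m → W) : ℝ :=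
  open Classical in
  ∑ p ∈ K.filter (fun p => p ∉ Submodule.span F (Set.range x)),
    ((K.card : ℝ) - cnt K (Submodule.span F (insert p (Set.range x))))

theorem ind_card_succ2 (K : Finset W) (m : ℕ) :
    ((IndSet F K (m+2)).card : ℝ) = ∑ x ∈ IndSet F K m, wt F K x := by
  classical
  rw [ind_card_succ, ind_sum_succ]
  refine Finset.sum_congr rfl fun x _ => ?_
  rw [wt]
  refine Finset.sum_congr (by congr) fun p _ => ?_
  rw [Fin.range_snoc]

theorem ind_zero (K : Finset W) : (IndSet F K 0).card = 1 := by
  rw [Finset.card_eq_one]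
  refine ⟨Fin.elim0, ?_⟩
  ext x
  rw [mem_IndSet, Finset.mem_singleton]
  constructor
  · intro _; exact Subsingleton.elim _ _
  · intro _; exact ⟨fun i => i.elim0, linearIndependent_empty_type⟩

theorem cnt_le (K : Finset W) (S : Submodule F W) : cnt K S ≤ K.card := by
  classical
  exact Finset.card_filter_le _ _
theorem cnt_mono (K : Finset W) {S T : Submodule F W} (h : S ≤ T) : cnt K S ≤ cnt K T := by
  classical
  exact Finset.card_le_card (Finset.monotone_filter_right _ (fun x _ hx => h hx))

theorem finrank_ind {K : Finset W} {m : ℕ} {x : Fin m → W} (h : x ∈ IndSet F K m) :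
    finrank F (Submodule.span F (Set.range x)) = m := by
  have := finrank_span_eq_card (mem_IndSet.1 h).2
  simpa using this

theorem finrank_ind_insert {K : Finset W} {m : ℕ} {x : Fin m → W} (h : x ∈ IndSet F K m) {p : W}
    (hp : p ∉ Submodule.span F (Set.range x)) :
    finrank F (Submodule.span F (insert p (Set.range x))) = m + 1 := by
  have h1 : LinearIndependent F (Fin.snoc x p : Fin (m+1) → W) :=
    linearIndependent_finSnoc.2 ⟨(mem_IndSet.1 h).2, hp⟩
  have := finrank_span_eq_card h1
  rw [Fin.range_snoc] at this
  simpa using this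

variable (σ : W →ₗ[F] F) (B : W →ₗ[F] W →ₗ[F] F) (hB : ∀ u v, B u v = B v u)
  (K : Finset W) (hσ : ∀ p ∈ K, σ p = 1) (hQ : ∀ p ∈ K, B p p = 0)

theorem q_ge : (2:ℕ) ≤ Fintype.card F := Fintype.one_lt_card

include hσ in
theorem cnt_ind1 {m : ℕ} {x : Fin (m+1) → W} (h : x ∈ IndSet F K (m+1)) :
    cnt K (Submodule.span F (Set.range x)) ≤ Fintype.card F ^ m := by
  have h0 := (mem_IndSet.1 h).1 0
  have := cnt1 σ K hσ (Submodule.span F (Set.range x)) (x 0) (Submodule.subset_span ⟨0, rfl⟩) (hσ _ h0)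
  rw [finrank_ind h, pow_succ, mul_comm] at this
  exact Nat.le_of_mul_le_mul_right this Fintype.card_pos

include hσ in
theorem ind_lower (m : ℕ) (hk : Fintype.card F ^ m ≤ K.card) :
    (K.card : ℝ)^m * (K.card - ∑ j ∈ Finset.range m, (Fintype.card F : ℝ)^j) ≤ (IndSet F K (m+1)).card := by
  classical
  induction m with
  | zero =>
    rw [ind_card_succ]
    have : ∀ x ∈ IndSet F K 0, (K.card : ℝ) - cnt K (Submodule.span F (Set.range x)) = K.card := by
      intro x _
      have : Submodule.span F (Set.range x) = ⊥ := by
        rw [Set.range_eq_empty, Submodule.span_empty]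
      rw [this, sub_eq_self, cnt]
      simp only [Nat.cast_eq_zero, Finset.card_eq_zero]
      rw [Finset.filter_eq_empty_iff]
      intro p hp h
      have := hσ p hp
      rw [Submodule.mem_bot] at h
      simp [h] at this
    rw [Finset.sum_congr rfl this, Finset.sum_const, ind_zero]
    simp
  | succ m ih =>
    have ih := ih (le_trans (Nat.pow_le_pow_right Fintype.card_pos (by omega)) hk)
    rw [ind_card_succ]
    have hk' : (Fintype.card F : ℝ)^m ≤ K.card := by
      exact_mod_cast le_trans (Nat.pow_le_pow_right Fintype.card_pos (by omega)) hk
    have h1 : (IndSet F K (m+1)).card * ((K.card : ℝ) - (Fintype.card F : ℝ)^m) ≤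
        ∑ x ∈ IndSet F K (m+1), ((K.card : ℝ) - cnt K (Submodule.span F (Set.range x))) := by
      rw [← nsmul_eq_mul]
      refine Finset.card_nsmul_le_sum _ _ _ fun x hx => ?_
      have : (cnt K (Submodule.span F (Set.range x)) : ℝ) ≤ (Fintype.card F : ℝ)^m := by
        exact_mod_cast cnt_ind1 σ K hσ hx
      linarith
    refine le_trans ?_ h1
    refine le_trans ?_ (mul_le_mul_of_nonneg_right ih (by linarith))
    rw [Finset.sum_range_succ, pow_succ, mul_assoc, mul_assoc]
    refine mul_le_mul_of_nonneg_left ?_ (by positivity)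
    have hs : 0 ≤ ∑ j ∈ Finset.range m, (Fintype.card F : ℝ)^j := by positivity
    nlinarith [mul_nonneg hs (pow_nonneg (Nat.cast_nonneg (α := ℝ) (Fintype.card F)) m)]

/-- pencil double count -/
theorem pencil (A : Submodule F W) (hA : ∀ p ∈ K, p ∈ A) {m : ℕ} {x : Fin m → W} (h : x ∈ IndSet F K m) (f : ℕ)
    (hf : ∀ v, v ∈ A → v ∉ Submodule.span F (Set.range x) → cnt K (Submodule.span F (insert v (Set.range x))) ≤ f) :
    ((K.card:ℝ) - cnt K (Submodule.span F (Set.range x))) * ((Fintype.card F : ℝ)^(m+1) - (Fintype.card F : ℝ)^m)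
      ≤ ((Fintype.card F : ℝ)^(finrank F A) - (Fintype.card F : ℝ)^m) *
        (f - cnt K (Submodule.span F (Set.range x))) := by
  classical
  set S := Submodule.span F (Set.range x) with hS
  have hc : ∀ T : Submodule F W, S ≤ T → ((Finset.univ.filter fun v : W => v ∉ S ∧ v ∈ T).card : ℝ) =
      (Fintype.card F : ℝ)^(finrank F T) - (Fintype.card F : ℝ)^m := by
    intro T hST
    have e1 : ∀ T : Submodule F W, (Finset.univ.filter fun v : W => v ∈ T).card = Fintype.card F ^ finrank F T := by
      intro T
      rw [← Nat.card_eq_fintype_card, ← Module.natCard_eq_pow_finrank (K := F) (V := T), Nat.card_eq_fintype_card, Fintype.card_subtype]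
    have e2 := Finset.card_filter_add_card_filter_not (s := Finset.univ.filter fun v : W => v ∈ T) (fun v => v ∈ S)
    rw [Finset.filter_filter, Finset.filter_filter, e1] at e2
    have e3 : (Finset.univ.filter fun v : W => v ∈ T ∧ v ∈ S) = Finset.univ.filter fun v : W => v ∈ S := by
      ext v; simp; exact fun h => hST h
    rw [e3, e1, hS, finrank_ind h] at e2
    rw [eq_sub_iff_add_eq']
    have e4 : (Finset.univ.filter fun v : W => v ∉ S ∧ v ∈ T) = Finset.univ.filter fun v : W => v ∈ T ∧ v ∉ S := by
      ext v; simp [and_comm]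
    rw [e4]; exact_mod_cast e2
  have hdc := Finset.sum_card_bipartiteAbove_eq_sum_card_bipartiteBelow
    (s := K.filter (· ∉ S)) (t := Finset.univ.filter fun v : W => v ∉ S ∧ v ∈ A)
    (r := fun p v => p ∈ Submodule.span F (insert v (Set.range x)))
  have h1 : ∀ p ∈ K.filter (· ∉ S), ((Finset.bipartiteAbove (fun p v => p ∈ Submodule.span F (insert v (Set.range x))) (Finset.univ.filter fun v : W => v ∉ S ∧ v ∈ A) p).card : ℝ)
      = (Fintype.card F : ℝ)^(m+1) - (Fintype.card F : ℝ)^m := by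
    intro p hp
    have hp2 := (Finset.mem_filter.1 hp).2
    rw [← finrank_ind_insert h hp2, ← hc _ (Submodule.span_mono (Set.subset_insert _ _)), Finset.bipartiteAbove, Finset.filter_filter]
    have hle : Submodule.span F (insert p (Set.range x)) ≤ A := by
      rw [Submodule.span_le]
      refine Set.insert_subset (hA _ (Finset.mem_filter.1 hp).1) ?_
      rintro _ ⟨i, rfl⟩
      exact hA _ ((mem_IndSet.1 h).1 i)
    congr 2
    ext v
    simp only [Finset.mem_filter, Finset.mem_univ, true_and, and_assoc]
    refine and_congr_right fun hv => ⟨fun h => mem_span_insert_exchange h.2 hp2, fun h => ⟨hle h, mem_span_insert_exchange h hv⟩⟩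
  have h2 : ∀ v ∈ Finset.univ.filter fun v : W => v ∉ S ∧ v ∈ A, ((Finset.bipartiteBelow (fun p v => p ∈ Submodule.span F (insert v (Set.range x))) (K.filter (· ∉ S)) v).card : ℝ)
      ≤ f - cnt K S := by
    intro v hv
    have hv2 := (Finset.mem_filter.1 hv).2
    rw [Finset.bipartiteBelow, le_sub_iff_add_le]
    have e2 := Finset.card_filter_add_card_filter_not (s := K.filter fun p : W => p ∈ Submodule.span F (insert v (Set.range x))) (fun v => v ∈ S)
    have hST : S ≤ Submodule.span F (insert v (Set.range x)) := Submodule.span_mono (Set.subset_insert _ _)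
    have := hf v hv2.2 hv2.1
    have e3 : (K.filter fun p : W => p ∈ Submodule.span F (insert v (Set.range x))).filter (· ∈ S) = K.filter (· ∈ S) := by
      ext p; simp only [Finset.mem_filter]; exact ⟨fun h => ⟨h.1.1, h.2⟩, fun h => ⟨⟨h.1, hST h.2⟩, h.2⟩⟩
    have e4 : (K.filter fun p : W => p ∈ Submodule.span F (insert v (Set.range x))).filter (· ∉ S) = (K.filter (· ∉ S)).filter (fun p => p ∈ Submodule.span F (insert v (Set.range x))) := by
      rw [Finset.filter_comm]
    rw [e3, e4] at e2
    rw [cnt] at this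
    rw [← e2] at this
    rw [cnt]
    rw [add_comm]
    exact_mod_cast this
  have hdc' : (∑ p ∈ K.filter (· ∉ S), ((Finset.bipartiteAbove (fun p v => p ∈ Submodule.span F (insert v (Set.range x))) (Finset.univ.filter fun v : W => v ∉ S ∧ v ∈ A) p).card : ℝ))
     = ∑ v ∈ Finset.univ.filter fun v : W => v ∉ S ∧ v ∈ A, ((Finset.bipartiteBelow (fun p v => p ∈ Submodule.span F (insert v (Set.range x))) (K.filter (· ∉ S)) v).card : ℝ) := by
    exact_mod_cast hdc
  rw [Finset.sum_congr rfl h1, Finset.sum_const, nsmul_eq_mul, card_filter_not] at hdc'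
  rw [hdc']
  refine (Finset.sum_le_card_nsmul _ _ _ h2).trans (le_of_eq ?_)
  rw [nsmul_eq_mul]
  have := hc A (by
    rw [hS, Submodule.span_le]
    rintro _ ⟨i, rfl⟩
    exact hA _ ((mem_IndSet.1 h).1 i))
  rw [this]

end comb
end ADT

namespace ADT
open Module
set_option linter.unusedVariables false
set_option linter.unusedSectionVars false

theorem polyG (q k u : ℝ) (hq : 3 ≤ q) (hu : 0 ≤ u) (hk : 2 * q * u ≤ k) :
    q*(q-1)*k^2*(k-2*q*u) ≤ (q+1)*(k-(q+1)*u)^2*(k*(q-1)-q*u) := by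
  obtain ⟨v, rfl⟩ : ∃ v, q = 3 + v := ⟨q - 3, by ring⟩
  obtain ⟨x, rfl⟩ : ∃ x, k = 2 * (3+v) * u + x := ⟨k - 2 * (3+v) * u, by ring⟩
  have hv : 0 ≤ v := by linarith
  have hx : 0 ≤ x := by linarith
  have a : 0 ≤ 144*u^3 - 40*u^2*x-4*u*x^2+2*x^3 := by
    nlinarith [mul_nonneg hx (sq_nonneg (3*x-10*u)), mul_nonneg hu (sq_nonneg (3*x-10*u)), pow_nonneg hu 3, pow_nonneg hx 3]
  have b : 0 ≤ 324*u^3 - 16*u^2*x+u*x^2+x^3 := by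
    nlinarith [mul_nonneg hu (sq_nonneg (x-8*u)), pow_nonneg hu 3, pow_nonneg hx 3]
  have c : 0 ≤ v^2*(284*u^3+14*u^2*x+u*x^2)+v^3*(121*u^3+8*u^2*x)+v^4*(25*u^3+u^2*x)+2*v^5*u^3 := by positivity
  have b' := mul_nonneg hv b
  nlinarith [a, b', c]

section
variable {F : Type*} [Field F] [Fintype F]
variable {W : Type*} [AddCommGroup W] [Module F W] [Fintype W]
variable (σ : W →ₗ[F] F) (B : W →ₗ[F] W →ₗ[F] F) (hB : ∀ u v, B u v = B v u)
  (K : Finset W) (hσ : ∀ p ∈ K, σ p = 1) (hQ : ∀ p ∈ K, B p p = 0)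

theorem geom_le (q : ℝ) (hq : 3 ≤ q) (e : ℕ) : (q-1) * ∑ j ∈ Finset.range (e+1), q^j ≤ q * q^e := by
  have := mul_geom_sum q (e+1)
  rw [this, pow_succ]; nlinarith

include hB hσ hQ in
theorem caseG (h2 : (2 : F) ≠ 0) (h3 : 3 ≤ Fintype.card F) (e : ℕ) (he : 2 ≤ e) (A : Submodule F W) (hA : ∀ p ∈ K, p ∈ A) (hW : finrank F A = e + 4) (hno : NoIso σ B (e+4))
    (hk : 2 * Fintype.card F ^ (e+1) < K.card) :
    (K.card : ℝ)^(e+4) - 2 * (Fintype.card F : ℝ)^(e+1) * (K.card : ℝ)^(e+3) ≤ (IndSet F K (e+4)).card := by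
  classical
  set q : ℝ := (Fintype.card F : ℝ) with hqd
  set k : ℝ := (K.card : ℝ) with hkd
  have hq3 : 3 ≤ q := by rw [hqd]; exact_mod_cast h3
  have hkr : 2 * q ^ (e+1) < k := by rw [hqd, hkd]; exact_mod_cast hk
  set u := q^e with hu
  have hu0 : 0 < u := by positivity
  have hkr' : 2 * q * u ≤ k := by rw [pow_succ] at hkr; nlinarith
  have hfk : (q+1)*u ≤ k := by nlinarith
  have hkp : 0 < k := by nlinarith [mul_pos (show 0 < q by linarith) hu0]
  have hlow := ind_lower σ K hσ (e+1) (by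
    have : Fintype.card F ^ (e+1) ≤ 2 * Fintype.card F ^ (e+1) := by omega
    omega)
  rw [← hqd, ← hkd] at hlow
  have hf : ∀ z ∈ IndSet F K (e+2), ∀ v, v ∉ Submodule.span F (Set.range z) →
      cnt K (Submodule.span F (insert v (Set.range z))) ≤ (Fintype.card F + 1) * Fintype.card F ^ e := by
    intro z hz v hv
    have h := cnt_noiso3 σ B hB K hσ hQ h2 hno (Submodule.span F (insert v (Set.range z))) (z 0)
      (Submodule.subset_span (Set.mem_insert_of_mem _ ⟨0, rfl⟩)) ((mem_IndSet.1 hz).1 0)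
      (by rw [finrank_ind_insert hz hv]; omega)
    rw [finrank_ind_insert hz hv] at h
    have e1 : (Fintype.card F + 1) * Fintype.card F ^ (e+2+1) = Fintype.card F ^ 3 * ((Fintype.card F + 1) * Fintype.card F ^ e) := by ring
    rw [e1] at h
    exact Nat.le_of_mul_le_mul_left h (by positivity)
  have hw : ∀ z ∈ IndSet F K (e+2), (q+1) * (k-(q+1)*u)^2 / q ≤ wt F K z := by
    intro z hz
    have hp := pencil K A hA hz _ (fun v _ hv => hf z hz v hv)
    rw [hW, ← hqd, ← hkd] at hp
    push_cast at hp
    rw [← hqd, ← hu] at hp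
    set a : ℝ := (cnt K (Submodule.span F (Set.range z)) : ℝ) with ha
    have hak : a ≤ k := by rw [ha, hkd]; exact_mod_cast cnt_le _ _
    have e1 : (k - a) ≤ (q+1) * ((q+1)*u-a) := by
      have e2 : q^(e+2+1)-q^(e+2) = (q^2*u)*(q-1) := by rw [hu]; ring
      have e3 : q^(e+4)-q^(e+2) = (q^2*u)*(q-1)*(q+1) := by rw [hu]; ring
      rw [e2, e3] at hp
      have : 0 < (q^2*u)*(q-1) := by
        have : 0 < q - 1 := by linarith
        positivity
      refine le_of_mul_le_mul_left ?_ this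
      linarith
    have e4 : (q+1)*(k-(q+1)*u) ≤ q*(k-a) := by linarith
    have e5 : (k-a)*(k-(q+1)*u) ≤ wt F K z := by
      rw [wt, ha, hkd, ← card_filter_not, ← nsmul_eq_mul, ← hkd]
      refine le_trans ?_ (Finset.card_nsmul_le_sum _ _ (k-(q+1)*u) fun p hp => ?_)
      · apply le_of_eq; congr
      · have := hf z hz p (Finset.mem_filter.1 hp).2
        have : (cnt K (Submodule.span F (insert p (Set.range z))) : ℝ) ≤ (q+1)*u := by
          rw [hu, hqd]; exact_mod_cast this
        linarith
    rw [div_le_iff₀ (by linarith)]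
    nlinarith [mul_le_mul_of_nonneg_right e4 (show 0 ≤ k - (q+1)*u by linarith)]
  rw [show e+4 = (e+2)+2 from rfl, ind_card_succ2]
  have h5 := Finset.card_nsmul_le_sum _ _ _ hw
  refine le_trans ?_ h5
  rw [nsmul_eq_mul]
  refine le_trans ?_ (mul_le_mul_of_nonneg_right hlow (by positivity))
  have hg := geom_le q hq3 e
  set s := ∑ j ∈ Finset.range (e+1), q^j with hs
  have hpoly := polyG q k u hq3 hu0.le hkr'
  have h6 : (q-1)*(k - s) ≥ k*(q-1)-q*u := by rw [hu]; linarith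
  have h7 : q*k^2*(k-2*q*u) ≤ (q+1)*(k-(q+1)*u)^2*(k-s) := by
    have : 0 < q - 1 := by linarith
    refine le_of_mul_le_mul_left ?_ this
    have := mul_le_mul_of_nonneg_left h6 (show 0 ≤ (q+1)*(k-(q+1)*u)^2 by positivity)
    nlinarith
  have h8 : k^2*(k-2*q*u) ≤ (k-s)*((q+1)*(k-(q+1)*u)^2/q) := by
    rw [← mul_div_assoc, le_div_iff₀ (by linarith)]
    linarith
  have h9 := mul_le_mul_of_nonneg_left h8 (show 0 ≤ k^(e+1) by positivity)
  calc _ = k^(e+1)*(k^2*(k-2*q*u)) := by rw [hu]; ring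
    _ ≤ _ := h9
    _ = _ := by ring
end
end ADT

namespace ADT
set_option linter.unusedVariables false

theorem D3pos (q k : ℝ) (hq : 3 ≤ q) (hk : 2*q ≤ k) :
    0 ≤ q*q*k*(2*q*k^3-k*(k-1)*(k-2)*(2*q-3))-q*k*(q-2)*(k*k+k*q*(q-1))*(k-2*q)
      +(q-1)*((q*k*(k-1)-(k*k+k*q*(q-1)))*(2*(q*k*(k-1)-(k*k+k*q*(q-1)))-q*k*k)) := by
  obtain ⟨v, rfl⟩ : ∃ v, q = 3 + v := ⟨q - 3, by ring⟩
  obtain ⟨x, rfl⟩ : ∃ x, k = 2 * (3+v) + x := ⟨k - 2 * (3+v), by ring⟩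
  have hv : 0 ≤ v := by linarith
  have hx : 0 ≤ x := by linarith
  ring_nf
  positivity

theorem goodman_mono {k I e m : ℝ} (hk : 0 ≤ k) (hI : 0 ≤ I) (h : e*(2*e-k^2) ≤ k*I) (hm : 0 ≤ m) (hme : m ≤ e) :
    m*(2*m-k^2) ≤ k*I := by
  rcases le_or_gt (2*m-k^2) 0 with h0 | h0
  · nlinarith [mul_nonneg hk hI, mul_nonneg hm (show 0 ≤ -(2*m-k^2) by linarith)]
  · nlinarith [mul_nonneg (sub_nonneg.2 hme) h0.le, mul_nonneg (sub_nonneg.2 hme) (hm.trans hme)]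

theorem fin4 (q k U I I3 I4 : ℝ) (hq : 3 ≤ q) (hk : 2*q ≤ k) (hI : 0 ≤ I)
    (hG : (k*(k-1)-U)*(2*(k*(k-1)-U)-k^2) ≤ k*I)
    (h3 : k*(k-1)*(k-2)-(q-2)*U ≤ I3)
    (h4 : I3*(k-2*q)+(q-1)*I ≤ I4)
    (hU : q*U ≤ k^2+k*q*(q-1)) :
    k*(k-1)*(k-2)*(k-3)-2*q*k^3 ≤ I4 := by
  have hq0 : 0 < q := by linarith
  have hk0 : 0 < k := by linarith
  set m := (q*k*(k-1)-(k*k+k*q*(q-1)))/q with hm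
  have hmq : q*m = q*k*(k-1)-(k*k+k*q*(q-1)) := by rw [hm]; field_simp
  have hm0 : 0 ≤ m := by
    apply div_nonneg _ hq0.le
    have : 0 ≤ k*((q-1)*(k-2*q)+ (q*(q-2))) := by
      have : 0 ≤ k - 2*q := by linarith
      have : 0 ≤ q - 2 := by linarith
      have : 0 ≤ q - 1 := by linarith
      positivity
    nlinarith
  have hme : m ≤ k*(k-1)-U := by
    rw [hm, div_le_iff₀ hq0]; nlinarith
  have hG' := goodman_mono hk0.le hI hG hm0 hme
  have hD := D3pos q k hq hk
  rw [← hmq] at hD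
  have h5 : q^2*(m*(2*m-k^2)) ≤ q^2*(k*I) := mul_le_mul_of_nonneg_left hG' (by positivity)
  have h6 : q^2*k*(((k*(k-1)*(k-2)-(q-2)*U))*(k-2*q)) ≤ q^2*k*(I3*(k-2*q)) :=
    mul_le_mul_of_nonneg_left (mul_le_mul_of_nonneg_right h3 (by linarith)) (by positivity)
  have h7 : q*k*(q-2)*(k-2*q)*(q*U) ≤ q*k*(q-2)*(k-2*q)*(k^2+k*q*(q-1)) := by
    refine mul_le_mul_of_nonneg_left hU ?_
    have : 0 ≤ k - 2*q := by linarith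
    have : 0 ≤ q - 2 := by linarith
    positivity
  have h8 : (q-1)*(q^2*(m*(2*m-k^2))) ≤ (q-1)*(q^2*(k*I)) := mul_le_mul_of_nonneg_left h5 (by linarith)
  have h9 : q^2*k*(I3*(k-2*q)+(q-1)*I) ≤ q^2*k*I4 := mul_le_mul_of_nonneg_left h4 (by positivity)
  have : q^2*k*(k*(k-1)*(k-2)*(k-3)-2*q*k^3) ≤ q^2*k*I4 := by
    nlinarith
  exact le_of_mul_le_mul_left this (by positivity)

theorem D52pos (q k : ℝ) (hq : 3 ≤ q) (hk : 3*q^2 ≤ k) :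
    0 ≤ q*k*((q*k*(k-1)*(k-2)-(k*k+k*q^3+k*q)*(q-2))*(k-2*q)*(k-2*q^2)
      -((k*k+k*q^3+k*q)*q^2+k*(q+1)*q^3)*(q^2-2*q)*(k-2*q^2)
      -q*(k*(k-1)*(k-2)*(k-3)*(k-4)-2*q^2*k^4))
      + (q*k*(k-1)-(k*k+k*q^3+k*q))*(2*(q*k*(k-1)-(k*k+k*q^3+k*q))-q*k^2)*(k-2*q)*(q^2-q) := by
  obtain ⟨v, rfl⟩ : ∃ v, q = 3 + v := ⟨q - 3, by ring⟩
  obtain ⟨x, rfl⟩ : ∃ x, k = 3 * (3+v)^2 + x := ⟨k - 3 * (3+v)^2, by ring⟩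
  have hv : 0 ≤ v := by linarith
  have hx : 0 ≤ x := by linarith
  ring_nf
  positivity

theorem D51pos (q k : ℝ) (hq : 3 ≤ q) (hk : 2*q^2 ≤ k) (hk' : k ≤ 3*q^2) :
    0 ≤ (k-2*q^2)*(4*(q*k*(k-1)*(k-2)-(k*k+k*q^3+k*q)*(q-2))*(q^2-q)
      -((k*k+k*q^3+k*q)*q^2+k*(q+1)*q^3)*(5*q^2-4*q-k))
      -q*(k*(k-1)*(k-2)*(k-3)*(k-4)-2*q^2*k^4) := by
  obtain ⟨u, rfl⟩ : ∃ u, k = 2 * q^2 + u := ⟨k - 2 * q^2, by ring⟩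
  have hu : 0 ≤ u := by linarith
  have hu' : 0 ≤ q^2 - u := by linarith
  set c0 := -48*q^3+200*q^5-280*q^7+160*q^9 with h0
  set c1 := -24*q+200*q^3-32*q^4-412*q^5+88*q^6+292*q^7-50*q^8+10*q^9 with h1
  set c2 := 50*q-16*q^2-222*q^3+92*q^4+206*q^5-57*q^6+15*q^7 with h2
  set c3 := -43*q+24*q^2+70*q^3-22*q^4+q^5 with h3
  set c4 := 10*q-3*q^2-4*q^3 with h4
  have p0 : 0 ≤ c0 ∧ 0 ≤ c1 ∧ 0 ≤ -c4 ∧ 0 ≤ -(c3+c4*q^2-q*q^4) ∧ 0 ≤ c2+(c3+c4*q^2-q*q^4)*q^2 := by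
    obtain ⟨v, rfl⟩ : ∃ v, q = 3 + v := ⟨q - 3, by ring⟩
    have hv : 0 ≤ v := by linarith
    rw [h0, h1, h2, h3, h4]
    refine ⟨?_, ?_, ?_, ?_, ?_⟩ <;> ring_nf <;> positivity
  obtain ⟨p0, p1, p4, p3, p2⟩ := p0
  have hq0 : 0 ≤ q := by linarith
  have key : 0 ≤ c2 + c3*u+c4*u^2-q*u^3 := by
    have a1 : 0 ≤ q*u*((q^2-u)*(q^2+u)) := by positivity
    have a2 : 0 ≤ (-c4)*(u*(q^2-u)) := by positivity
    have a3 : 0 ≤ (-(c3+c4*q^2-q*q^4))*(q^2-u) := by positivity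
    linarith
  have fin : 0 ≤ c0 + c1*u + (c2 + c3*u+c4*u^2-q*u^3)*u^2 := by positivity
  rw [h0, h1, h2, h3, h4] at fin
  linarith

theorem fin5a (q k U T I3 I5 : ℝ) (hq : 3 ≤ q) (hk : 2*q^2 ≤ k) (hk' : k ≤ 3*q^2)
    (h3 : k*(k-1)*(k-2)-(q-2)*U ≤ I3)
    (h4 : I3*(4*(q^2-q)*(k-2*q^2)) - T*((k-2*q^2)*(5*q^2-4*q-k)) ≤ I5)
    (hU : q*U ≤ k^2+k*q^3+k*q) (hT : T ≤ U*q^2+k*(q+1)*q^2) :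
    k*(k-1)*(k-2)*(k-3)*(k-4)-2*q^2*k^4 ≤ I5 := by
  have hq0 : 0 < q := by linarith
  have hD := D51pos q k hq hk hk'
  have a1 : 0 ≤ k-2*q^2 := by linarith
  have a2 : 0 ≤ 5*q^2-4*q-k := by nlinarith
  have a3 : 0 ≤ q^2-q := by nlinarith
  have a4 : 0 ≤ q-2 := by linarith
  have b1 : q*T ≤ (k*k+k*q^3+k*q)*q^2+k*(q+1)*q^3 := by nlinarith [mul_le_mul_of_nonneg_left hT hq0.le, mul_le_mul_of_nonneg_right hU (sq_nonneg q)]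
  have b2 : q*k*(k-1)*(k-2)-(k*k+k*q^3+k*q)*(q-2) ≤ q*I3 := by
    nlinarith [mul_le_mul_of_nonneg_left h3 hq0.le, mul_le_mul_of_nonneg_right hU a4]
  have c1 := mul_le_mul_of_nonneg_right b1 (mul_nonneg a1 a2)
  have c2 := mul_le_mul_of_nonneg_right b2 (mul_nonneg a3 a1)
  have c3 := mul_le_mul_of_nonneg_left h4 hq0.le
  refine le_of_mul_le_mul_left ?_ hq0
  linarith

set_option maxHeartbeats 1000000 in
theorem fin5b (q k U T I I3 I5 : ℝ) (hq : 3 ≤ q) (hk : 3*q^2 ≤ k) (hI : 0 ≤ I)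
    (hG : (k*(k-1)-U)*(2*(k*(k-1)-U)-k^2) ≤ k*I)
    (h3 : k*(k-1)*(k-2)-(q-2)*U ≤ I3)
    (h4 : I3*((k-2*q)*(k-2*q^2)) + I*((k-2*q)*(q^2-q)) - T*((q^2-2*q)*(k-2*q^2)) ≤ I5)
    (hU : q*U ≤ k^2+k*q^3+k*q) (hT : T ≤ U*q^2+k*(q+1)*q^2) :
    k*(k-1)*(k-2)*(k-3)*(k-4)-2*q^2*k^4 ≤ I5 := by
  have hq0 : 0 < q := by linarith
  have hk0 : 0 < k := by nlinarith
  have hD := D52pos q k hq hk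
  have a1 : 0 ≤ k-2*q^2 := by nlinarith
  have a2 : 0 ≤ k-2*q := by nlinarith
  have a3 : 0 ≤ q^2-q := by nlinarith
  have a4 : 0 ≤ q-2 := by linarith
  have a5 : 0 ≤ q^2-2*q := by nlinarith
  have b1 : q*T ≤ (k*k+k*q^3+k*q)*q^2+k*(q+1)*q^3 := by nlinarith [mul_le_mul_of_nonneg_left hT hq0.le, mul_le_mul_of_nonneg_right hU (sq_nonneg q)]
  have b2 : q*k*(k-1)*(k-2)-(k*k+k*q^3+k*q)*(q-2) ≤ q*I3 := by
    nlinarith [mul_le_mul_of_nonneg_left h3 hq0.le, mul_le_mul_of_nonneg_right hU a4]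
  set m := (q*k*(k-1)-(k*k+k*q^3+k*q))/q with hm
  have hmq : q*m = q*k*(k-1)-(k*k+k*q^3+k*q) := by rw [hm]; field_simp
  have hm0 : 0 ≤ m := by
    apply div_nonneg _ hq0.le
    have : 0 ≤ k*((q-1)*(k-3*q^2)+ (q*(2*q^2-3*q-2))) := by
      have : 0 ≤ k - 3*q^2 := by linarith
      have : 0 ≤ 2*q^2-3*q-2 := by nlinarith
      have : 0 ≤ q - 1 := by linarith
      positivity
    nlinarith
  have hme : m ≤ k*(k-1)-U := by
    rw [hm, div_le_iff₀ hq0]; linarith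
  have hG' := goodman_mono hk0.le hI hG hm0 hme
  rw [← hmq] at hD
  have h5 : q^2*(m*(2*m-k^2)) ≤ q^2*(k*I) := mul_le_mul_of_nonneg_left hG' (by positivity)
  have c0 := mul_le_mul_of_nonneg_right h5 (mul_nonneg a2 a3)
  have c1 := mul_le_mul_of_nonneg_left (mul_le_mul_of_nonneg_right b1 (mul_nonneg a5 a1)) (show 0 ≤ q*k by positivity)
  have c2 := mul_le_mul_of_nonneg_left (mul_le_mul_of_nonneg_right b2 (mul_nonneg a2 a1)) (show 0 ≤ q*k by positivity)
  have c3 := mul_le_mul_of_nonneg_left h4 (show 0 ≤ q^2*k by positivity)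
  refine le_of_mul_le_mul_left ?_ (show 0 < q^2*k by positivity)
  linarith
end ADT

namespace ADT
open Module
set_option linter.unusedVariables false
set_option linter.unusedSectionVars false

theorem goodman {W : Type*} (K : Finset W) (n : W → W → ℝ) (hs : ∀ p r, n p r = n r p)
    (h01 : ∀ p r, 0 ≤ n p r ∧ n p r ≤ 1) :
    (∑ p ∈ K, ∑ r ∈ K, n p r) * (2 * (∑ p ∈ K, ∑ r ∈ K, n p r) - (K.card:ℝ)^2) ≤
      K.card * ∑ p ∈ K, ∑ r ∈ K, ∑ s ∈ K, n p r * n p s * n r s := by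
  set e := ∑ p ∈ K, ∑ r ∈ K, n p r with he
  set D := ∑ p ∈ K, (∑ r ∈ K, n p r)^2 with hD
  have h1 : 2 * D - K.card * e ≤ ∑ p ∈ K, ∑ r ∈ K, ∑ s ∈ K, n p r * n p s * n r s := by
    have : ∑ p ∈ K, ∑ r ∈ K, ∑ s ∈ K, n p r * (n p s + n r s - 1) ≤ ∑ p ∈ K, ∑ r ∈ K, ∑ s ∈ K, n p r * n p s * n r s := by
      refine Finset.sum_le_sum fun p _ => Finset.sum_le_sum fun r _ => Finset.sum_le_sum fun s _ => ?_
      rw [mul_assoc]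
      refine mul_le_mul_of_nonneg_left ?_ (h01 p r).1
      nlinarith [(h01 p s), (h01 r s), mul_nonneg (sub_nonneg.2 (h01 p s).2) (sub_nonneg.2 (h01 r s).2)]
    refine le_trans (le_of_eq ?_) this
    have a1 : ∑ p ∈ K, ∑ r ∈ K, ∑ s ∈ K, n p r * (n p s + n r s - 1) =
       (∑ p ∈ K, ∑ r ∈ K, ∑ s ∈ K, n p r * n p s) + (∑ p ∈ K, ∑ r ∈ K, ∑ s ∈ K, n p r * n r s) -
       ∑ p ∈ K, ∑ r ∈ K, ∑ s ∈ K, n p r := by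
      simp only [← Finset.sum_add_distrib, ← Finset.sum_sub_distrib]
      refine Finset.sum_congr rfl fun p _ => Finset.sum_congr rfl fun r _ => Finset.sum_congr rfl fun s _ => by ring
    have a2 : (∑ p ∈ K, ∑ r ∈ K, ∑ s ∈ K, n p r * n p s) = D := by
      rw [hD]
      refine Finset.sum_congr rfl fun p _ => ?_
      rw [sq, Finset.sum_mul_sum]
    have a3 : (∑ p ∈ K, ∑ r ∈ K, ∑ s ∈ K, n p r * n r s) = D := by
      rw [Finset.sum_comm, ← a2]
      refine Finset.sum_congr rfl fun p _ => Finset.sum_congr rfl fun r _ => Finset.sum_congr rfl fun s _ => by rw [hs r p]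
    have a4 : ∑ p ∈ K, ∑ r ∈ K, ∑ s ∈ K, n p r = K.card * e := by
      simp only [Finset.sum_const, nsmul_eq_mul, ← Finset.mul_sum]
      rw [he]
    rw [a1, a2, a3, a4]; ring
  have h2 : e^2 ≤ K.card * D := sq_sum_le_card_mul_sum_sq
  have hk : (0:ℝ) ≤ K.card := by positivity
  nlinarith [mul_le_mul_of_nonneg_left h1 hk]

section
variable {F : Type*} [Field F] [Fintype F]
variable {W : Type*} [AddCommGroup W] [Module F W] [Fintype W]

open Classical in
noncomputable def adjU (B : W →ₗ[F] W →ₗ[F] F) (K : Finset W) : ℕ :=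
  (K.offDiag.filter fun p => B p.1 p.2 = 0).card
open Classical in
noncomputable def Iset (B : W →ₗ[F] W →ₗ[F] F) (K : Finset W) : Finset (Fin 3 → W) :=
  (IndSet F K 3).filter fun x => B (x 0) (x 1) ≠ 0 ∧ B (x 0) (x 2) ≠ 0 ∧ B (x 1) (x 2) ≠ 0
open Classical in
noncomputable def Tset (B : W →ₗ[F] W →ₗ[F] F) (K : Finset W) : Finset (Fin 3 → W) :=
  (IndSet F K 3).filter fun x => B (x 0) (x 1) = 0 ∧ B (x 0) (x 2) = 0 ∧ B (x 1) (x 2) = 0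

variable (σ : W →ₗ[F] F) (B : W →ₗ[F] W →ₗ[F] F) (hB : ∀ u v, B u v = B v u)
  (K : Finset W) (hσ : ∀ p ∈ K, σ p = 1) (hQ : ∀ p ∈ K, B p p = 0)

include hB hQ in
theorem indep3 (h2 : (2 : F) ≠ 0) (p r s : W) (hp : p ∈ K) (hr : r ∈ K) (hs : s ∈ K) (h : B p r ≠ 0) (h' : B p s ≠ 0)
    (h'' : B r s ≠ 0) : LinearIndependent F ![p, r, s] := by
  rw [Fintype.linearIndependent_iff]
  intro g hg
  simp [Fin.sum_univ_three] at hg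
  have e1 := congrArg (B p) hg
  have e2 := congrArg (B r) hg
  have e3 := congrArg (B s) hg
  simp [hQ _ hp, hQ _ hr, hQ _ hs] at e1 e2 e3
  rw [hB r p] at e2
  rw [hB s p, hB s r] at e3
  set a := B p r
  set b := B p s
  set c := B r s
  have f0 : (2 * a * b) * g 0 = 0 := by linear_combination -c * e1 + b * e2 + a * e3
  have f1 : (2 * a * c) * g 1 = 0 := by linear_combination c * e1 - b * e2 + a * e3
  have f2 : (2 * b * c) * g 2 = 0 := by linear_combination c * e1 + b * e2 - a * e3
  have g0 : g 0 = 0 := (mul_eq_zero.1 f0).resolve_left (by positivity)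
  have g1 : g 1 = 0 := (mul_eq_zero.1 f1).resolve_left (by positivity)
  have g2 : g 2 = 0 := (mul_eq_zero.1 f2).resolve_left (by positivity)
  intro i
  fin_cases i <;> assumption

include hB hQ in
theorem goodmanI (h2 : (2 : F) ≠ 0) :
    ((K.card:ℝ)*(K.card - 1) - adjU B K) * (2 * ((K.card:ℝ)*(K.card - 1) - adjU B K) - (K.card:ℝ)^2) ≤
      K.card * (Iset B K).card := by
  classical
  have hg := goodman K (fun p r => if B p r ≠ 0 then 1 else 0) (fun p r => by rw [hB])
    (fun p r => by split_ifs <;> norm_num)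
  have he : (∑ p ∈ K, ∑ r ∈ K, (if B p r ≠ 0 then (1:ℝ) else 0)) = (K.card:ℝ)*(K.card - 1) - adjU B K := by
    rw [← Finset.sum_product', Finset.sum_boole]
    have h1 := Finset.card_filter_add_card_filter_not (s := K.offDiag) (fun p => B p.1 p.2 = 0)
    have h3 : K.offDiag.filter (fun p => ¬ B p.1 p.2 = 0) = (K ×ˢ K).filter (fun p => B p.1 p.2 ≠ 0) := by
      ext ⟨p, r⟩
      simp only [Finset.mem_filter, Finset.mem_offDiag, Finset.mem_product]
      constructor
      · rintro ⟨⟨a, b, c⟩, d⟩; exact ⟨⟨a, b⟩, d⟩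
      · rintro ⟨⟨a, b⟩, d⟩
        refine ⟨⟨a, b, ?_⟩, d⟩
        rintro rfl; exact d (hQ _ a)
    rw [h3, Finset.offDiag_card] at h1
    have h4 : K.card ≤ K.card * K.card := Nat.le_mul_self _
    have h5 : ((adjU B K : ℕ) : ℝ) + ((K ×ˢ K).filter (fun p => B p.1 p.2 ≠ 0)).card = K.card * K.card - K.card := by
      rw [← Nat.cast_mul, ← Nat.cast_sub h4, ← h1, adjU]; push_cast; ring
    linarith
  rw [he] at hg
  refine hg.trans (mul_le_mul_of_nonneg_left ?_ (by positivity))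
  have : (∑ p ∈ K, ∑ r ∈ K, ∑ s ∈ K, (if B p r ≠ 0 then (1:ℝ) else 0) * (if B p s ≠ 0 then 1 else 0) * (if B r s ≠ 0 then 1 else 0))
     = ((K ×ˢ (K ×ˢ K)).filter (fun p => B p.1 p.2.1 ≠ 0 ∧ B p.1 p.2.2 ≠ 0 ∧ B p.2.1 p.2.2 ≠ 0)).card := by
    rw [← Finset.sum_boole, Finset.sum_product]
    refine Finset.sum_congr rfl fun p _ => ?_
    rw [Finset.sum_product]
    refine Finset.sum_congr rfl fun r _ => Finset.sum_congr rfl fun s _ => ?_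
    by_cases a : B p r = 0 <;> by_cases b : B p s = 0 <;> by_cases c : B r s = 0 <;> simp [a, b, c]
  rw [this]
  norm_cast
  refine Finset.card_le_card_of_injOn (fun t => ![t.1, t.2.1, t.2.2]) ?_ ?_
  · rintro ⟨p, r, s⟩ h
    simp only [Finset.coe_filter, Finset.mem_product, Set.mem_ofPred_eq] at h
    obtain ⟨⟨hp, hr, hs⟩, a, b, c⟩ := h
    simp only [Iset, Finset.coe_filter, Set.mem_ofPred_eq, mem_IndSet]
    refine ⟨⟨?_, indep3 B hB K hQ h2 p r s hp hr hs a b c⟩, a, b, c⟩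
    intro i; fin_cases i <;> assumption
  · rintro ⟨p, r, s⟩ _ ⟨p', r', s'⟩ _ h
    have h0 := congrFun h 0
    have h1 := congrFun h 1
    have h2 := congrFun h 2
    simp at h0 h1 h2
    rw [h0, h1, h2]

include hB hσ hQ in
theorem cnt_pair (h2 : (2 : F) ≠ 0) (x : Fin 2 → W) (hx : x ∈ IndSet F K 2) (h : B (x 0) (x 1) ≠ 0) :
    cnt K (Submodule.span F (Set.range x)) ≤ 2 := by
  classical
  have hK := (mem_IndSet.1 hx).1
  have : K.filter (fun p => p ∈ Submodule.span F (Set.range x)) ⊆ {x 0, x 1} := by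
    intro p hp
    rw [Finset.mem_filter] at hp
    have hr : Set.range x = {x 0, x 1} := by
      ext v; simp [Fin.exists_fin_two, eq_comm]
    rw [hr, Submodule.mem_span_pair] at hp
    obtain ⟨hp, a, b, rfl⟩ := hp
    have h1 := hσ _ hp
    have h3 := hQ _ hp
    simp [hσ _ (hK 0), hσ _ (hK 1), hQ _ (hK 0), hQ _ (hK 1), hB (x 1) (x 0)] at h1 h3
    have h4 : a * b * (2 * B (x 0) (x 1)) = 0 := by linear_combination h3
    rcases mul_eq_zero.1 ((mul_eq_zero.1 h4).resolve_right (mul_ne_zero h2 h)) with h0 | h0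
    · have : b = 1 := by rw [h0] at h1; simpa using h1
      simp [h0, this]
    · have : a = 1 := by rw [h0] at h1; simpa using h1
      simp [h0, this]
  exact (Finset.card_le_card this).trans Finset.card_le_two

include hB hσ hQ in
theorem ind3_lower (h2 : (2 : F) ≠ 0) (hk : Fintype.card F ≤ K.card) (h3 : 3 ≤ Fintype.card F) :
    (K.card:ℝ)*(K.card - 1)*(K.card - 2) - (Fintype.card F - 2) * adjU B K ≤ (IndSet F K 3).card := by
  classical
  have hl := ind_lower σ K hσ 1 (by simpa using hk)
  simp at hl
  rw [ind_card_succ]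
  have hq : (3:ℝ) ≤ Fintype.card F := by exact_mod_cast h3
  have hkq : (Fintype.card F : ℝ) ≤ K.card := by exact_mod_cast hk
  have h1 : ∑ x ∈ IndSet F K 2, ((K.card - 2 : ℝ) - (Fintype.card F - 2) * (if B (x 0) (x 1) = 0 then 1 else 0)) ≤
      ∑ x ∈ IndSet F K 2, ((K.card : ℝ) - cnt K (Submodule.span F (Set.range x))) := by
    refine Finset.sum_le_sum fun x hx => ?_
    split_ifs with h
    · have : (cnt K (Submodule.span F (Set.range x)) : ℝ) ≤ (Fintype.card F : ℝ)^1 := by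
        exact_mod_cast cnt_ind1 σ K hσ hx
      linarith
    · have : (cnt K (Submodule.span F (Set.range x)) : ℝ) ≤ 2 := by
        exact_mod_cast cnt_pair σ B hB K hσ hQ h2 x hx h
      linarith
  refine le_trans ?_ h1
  rw [Finset.sum_sub_distrib, Finset.sum_const, nsmul_eq_mul, ← Finset.mul_sum, Finset.sum_boole]
  have h5 : ((IndSet F K 2).filter (fun x => B (x 0) (x 1) = 0)).card ≤ adjU B K := by
    refine Finset.card_le_card_of_injOn (fun x => (x 0, x 1)) ?_ ?_
    · intro x hx
      simp only [Finset.coe_filter, Set.mem_ofPred_eq, mem_IndSet] at hx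
      simp only [Finset.coe_filter, Set.mem_ofPred_eq, Finset.mem_offDiag]
      exact ⟨⟨hx.1.1 0, hx.1.1 1, fun h => by simpa using hx.1.2.injective h⟩, hx.2⟩
    · intro x _ y _ h
      simp only [Prod.mk.injEq] at h
      ext i; fin_cases i
      · exact h.1
      · exact h.2
  have h5' : (((IndSet F K 2).filter (fun x => B (x 0) (x 1) = 0)).card : ℝ) ≤ adjU B K := by exact_mod_cast h5
  have h6 := mul_le_mul_of_nonneg_left h5' (show (0:ℝ) ≤ Fintype.card F - 2 by linarith)
  have h7 := mul_le_mul_of_nonneg_right hl (show (0:ℝ) ≤ K.card - 2 by linarith)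
  linarith

include hB hσ hQ in
theorem case4 (h2 : (2 : F) ≠ 0) (h3 : 3 ≤ Fintype.card F) (hno : NoIso σ B 4)
    (hk : 2 * Fintype.card F < K.card)
    (hU : (Fintype.card F : ℝ) * adjU B K ≤ (K.card:ℝ)^2 + K.card * Fintype.card F * (Fintype.card F - 1)) :
    (K.card:ℝ)*(K.card-1)*(K.card-2)*(K.card-3) - 2 * (Fintype.card F) * (K.card : ℝ)^3 ≤ (IndSet F K 4).card := by
  classical
  have hq : (3:ℝ) ≤ Fintype.card F := by exact_mod_cast h3
  have hkq : 2 * (Fintype.card F : ℝ) ≤ K.card := by exact_mod_cast hk.le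
  refine fin4 _ _ (adjU B K) (Iset B K).card (IndSet F K 3).card _ hq hkq (by positivity) (goodmanI B hB K hQ h2)
    (ind3_lower σ B hB K hσ hQ h2 (by omega) h3) ?_ hU
  rw [ind_card_succ K 3]
  have h1 : ∑ x ∈ IndSet F K 3, ((K.card - 2 * Fintype.card F : ℝ) + (Fintype.card F - 1) * (if B (x 0) (x 1) ≠ 0 ∧ B (x 0) (x 2) ≠ 0 ∧ B (x 1) (x 2) ≠ 0 then 1 else 0)) ≤
      ∑ x ∈ IndSet F K 3, ((K.card : ℝ) - cnt K (Submodule.span F (Set.range x))) := by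
    refine Finset.sum_le_sum fun x hx => ?_
    have hK := (mem_IndSet.1 hx).1
    have hS : ∀ i, x i ∈ Submodule.span F (Set.range x) := fun i => Submodule.subset_span ⟨i, rfl⟩
    split_ifs with h
    · have := cnt_indep σ B hB K hσ hQ h2 _ (x 0) (x 1) (x 2) (hS 0) (hS 1) (hS 2) (hK 0) (hK 1) (hK 2) h.1 h.2.1 h.2.2
      rw [finrank_ind hx, mul_comm (Fintype.card F + 1)] at this
      have := Nat.le_of_mul_le_mul_left this (by positivity)
      have : (cnt K (Submodule.span F (Set.range x)) : ℝ) ≤ Fintype.card F + 1 := by exact_mod_cast this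
      linarith
    · have := cnt_noiso2 σ B hB K hσ hQ h2 hno _ (x 0) (hS 0) (hK 0) (by rw [finrank_ind hx]; omega)
      rw [finrank_ind hx, show 2 * Fintype.card F ^ 3 = Fintype.card F ^ 2 * (2 * Fintype.card F) by ring] at this
      have := Nat.le_of_mul_le_mul_left this (by positivity)
      have : (cnt K (Submodule.span F (Set.range x)) : ℝ) ≤ 2 * Fintype.card F := by exact_mod_cast this
      linarith
  refine le_trans (le_of_eq ?_) h1
  rw [Finset.sum_add_distrib, Finset.sum_const, nsmul_eq_mul, ← Finset.mul_sum, Finset.sum_boole, Iset]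

/-- w ≥ 2 (k - M)(M - a) -/
theorem wt_pencil {m : ℕ} {x : Fin m → W} (h : x ∈ IndSet F K m) (M : ℝ) (hMk : M ≤ K.card)
    (hM : ∀ p ∈ K, p ∉ Submodule.span F (Set.range x) → (cnt K (Submodule.span F (insert p (Set.range x))) : ℝ) ≤ M)
    (haM : (cnt K (Submodule.span F (Set.range x)) : ℝ) ≤ M) :
    2 * (K.card - M) * (M - cnt K (Submodule.span F (Set.range x))) ≤ wt F K x := by
  classical
  set S := Submodule.span F (Set.range x) with hS
  set a : ℝ := (cnt K S : ℝ) with ha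
  set k : ℝ := (K.card : ℝ) with hkd
  have hwdef : wt F K x = ∑ p ∈ K.filter (fun p => p ∉ S), (k - cnt K (Submodule.span F (insert p (Set.range x)))) := by
    rw [wt]
  have hcard := card_filter_not K S
  rw [← ha, ← hkd] at hcard
  rcases (K.filter (fun p => p ∉ S)).eq_empty_or_nonempty with h0 | h0
  · rw [hwdef, h0]
    rw [h0] at hcard
    simp at hcard
    have : k = a := by linarith
    simp
    rw [this]; nlinarith [sq_nonneg (a-M)]
  obtain ⟨p1, hp1, hmax⟩ := Finset.exists_max_image _ (fun p => cnt K (Submodule.span F (insert p (Set.range x)))) h0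
  set H := Submodule.span F (insert p1 (Set.range x)) with hH
  set m1 : ℝ := (cnt K H : ℝ) with hm1
  have hp1' := Finset.mem_filter.1 hp1
  have hm1M : m1 ≤ M := hM p1 hp1'.1 hp1'.2
  have hSH : S ≤ H := Submodule.span_mono (Set.subset_insert _ _)
  have ham : a ≤ m1 := by rw [ha, hm1]; exact_mod_cast cnt_mono K hSH
  have hmx : ∀ p ∈ K.filter (fun p => p ∉ S), (cnt K (Submodule.span F (insert p (Set.range x))) : ℝ) ≤ m1 := by
    intro p hp; rw [hm1]; exact_mod_cast hmax p hp
  have hw1 : (k-a)*(k-m1) ≤ wt F K x := by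
    rw [hwdef, ← hcard, ← nsmul_eq_mul]
    exact Finset.card_nsmul_le_sum _ _ _ fun p hp => by linarith [hmx p hp]
  have hw2 : 2*(m1-a)*(k-m1) ≤ wt F K x := by
    rw [hwdef, ← Finset.sum_filter_add_sum_filter_not _ (fun p => p ∈ H)]
    have c1 : (((K.filter (fun p => p ∉ S)).filter (fun p => p ∈ H)).card : ℝ) = m1 - a := by
      have e2 := Finset.card_filter_add_card_filter_not (s := K.filter fun p : W => p ∈ H) (fun v => v ∈ S)
      have e3 : (K.filter fun p : W => p ∈ H).filter (· ∈ S) = K.filter (· ∈ S) := by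
        ext p; simp only [Finset.mem_filter]; exact ⟨fun h => ⟨h.1.1, h.2⟩, fun h => ⟨⟨h.1, hSH h.2⟩, h.2⟩⟩
      rw [e3, Finset.filter_comm] at e2
      rw [hm1, ha, cnt, cnt, ← e2]; push_cast; ring
    have c2 : (((K.filter (fun p => p ∉ S)).filter (fun p => ¬ p ∈ H)).card : ℝ) = k - m1 := by
      rw [hm1, hkd, ← card_filter_not]
      congr 2
      ext p; simp only [Finset.mem_filter]; exact ⟨fun h => ⟨h.1.1, h.2⟩, fun h => ⟨⟨h.1, fun h' => h.2 (hSH h')⟩, h.2⟩⟩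
    have s1 : (m1 - a) * (k - m1) ≤ ∑ p ∈ (K.filter (fun p => p ∉ S)).filter (fun p => p ∈ H), (k - cnt K (Submodule.span F (insert p (Set.range x)))) := by
      rw [← c1, ← nsmul_eq_mul]
      exact Finset.card_nsmul_le_sum _ _ _ fun p hp => by linarith [hmx p (Finset.mem_filter.1 hp).1]
    have s2 : (k - m1) * (m1 - a) ≤ ∑ p ∈ (K.filter (fun p => p ∉ S)).filter (fun p => ¬ p ∈ H), (k - cnt K (Submodule.span F (insert p (Set.range x)))) := by
      nth_rewrite 1 [← c2]
      rw [← nsmul_eq_mul]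
      refine Finset.card_nsmul_le_sum _ _ _ fun p hp => ?_
      rw [Finset.mem_filter, Finset.mem_filter] at hp
      rw [le_sub_iff_add_le, ← c1, hkd]
      rw [cnt]
      norm_cast
      rw [← Finset.card_union_of_disjoint]
      · refine Finset.card_le_card fun r hr => ?_
        rw [Finset.mem_union, Finset.mem_filter, Finset.mem_filter, Finset.mem_filter] at hr
        rcases hr with h | h
        · exact h.1.1
        · exact h.1
      · rw [Finset.disjoint_left]
        intro r hr hr'
        rw [Finset.mem_filter, Finset.mem_filter] at hr
        rw [Finset.mem_filter] at hr'
        apply hp.2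
        have := mem_span_insert_exchange hr'.2 hr.1.2
        refine Submodule.span_le.2 ?_ this
        refine Set.insert_subset hr.2 ((Set.subset_insert _ _).trans Submodule.subset_span)
    linarith
  rcases le_or_gt ((k+a)/2) m1 with hc | hc
  · refine le_trans ?_ hw2
    nlinarith [mul_nonneg (sub_nonneg.2 hm1M) (show 0 ≤ m1+M-(k+a) by linarith)]
  · refine le_trans ?_ hw1
    have : 0 ≤ k - a := by linarith
    nlinarith [mul_nonneg this (show 0 ≤ (k+a)/2 - m1 by linarith), sq_nonneg ((k-M)-(M-a))]

theorem wt_ge {m : ℕ} (x : Fin m → W) (a M : ℝ) (hMk : M ≤ K.card)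
    (hM : ∀ p ∈ K, p ∉ Submodule.span F (Set.range x) → (cnt K (Submodule.span F (insert p (Set.range x))) : ℝ) ≤ M)
    (ha : (cnt K (Submodule.span F (Set.range x)) : ℝ) ≤ a) :
    (K.card - a) * (K.card - M) ≤ wt F K x := by
  classical
  refine le_trans (mul_le_mul_of_nonneg_right (sub_le_sub_left ha _) (by linarith)) ?_
  rw [wt, ← card_filter_not, ← nsmul_eq_mul]
  refine le_trans ?_ (Finset.card_nsmul_le_sum _ _ ((K.card:ℝ)-M) fun p hp => ?_)
  · apply le_of_eq; congr
  · have := hM p (Finset.mem_filter.1 hp).1 (Finset.mem_filter.1 hp).2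
    linarith
end
end ADT

namespace ADT
open Module
set_option linter.unusedVariables false
set_option linter.unusedSectionVars false

section
variable {F : Type*} [Field F] [Fintype F]
variable {W : Type*} [AddCommGroup W] [Module F W] [Fintype W]
variable (σ : W →ₗ[F] F) (B : W →ₗ[F] W →ₗ[F] F) (hB : ∀ u v, B u v = B v u)
  (K : Finset W) (hσ : ∀ p ∈ K, σ p = 1) (hQ : ∀ p ∈ K, B p p = 0)

include hB hσ hQ in
theorem cnt_nontri (h2 : (2 : F) ≠ 0) {x : Fin 3 → W} (hx : x ∈ IndSet F K 3)
    (h : ¬ (B (x 0) (x 1) = 0 ∧ B (x 0) (x 2) = 0 ∧ B (x 1) (x 2) = 0)) :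
    (cnt K (Submodule.span F (Set.range x)) : ℝ) ≤ 2 * Fintype.card F := by
  have hK := (mem_IndSet.1 hx).1
  have hS : ∀ i, x i ∈ Submodule.span F (Set.range x) := fun i => Submodule.subset_span ⟨i, rfl⟩
  have hex : ∃ i j, B (x i) (x j) ≠ 0 := by
    by_contra hc; push Not at hc
    exact h ⟨hc _ _, hc _ _, hc _ _⟩
  obtain ⟨i, j, hij⟩ := hex
  have := cnt2 σ B hB K hσ hQ h2 _ (x 0) (hS 0) (hσ _ (hK 0)) ⟨(2:F)⁻¹ • (x i + x j),
    Submodule.smul_mem _ _ (Submodule.add_mem _ (hS i) (hS j)), by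
      simp [hσ _ (hK i), hσ _ (hK j)]; rw [← two_mul, mul_inv_cancel₀ h2], by
      simp [hQ _ (hK i), hQ _ (hK j), hB (x j) (x i)]
      intro h0
      have : (2:F)⁻¹ + 2⁻¹ = 1 := by rw [← two_mul, mul_inv_cancel₀ h2]
      apply hij
      linear_combination 2 * h0 - B (x i) (x j) * ((2:F)⁻¹ + 2⁻¹ + 1) * this⟩
  rw [finrank_ind hx, show 2 * Fintype.card F ^ 3 = Fintype.card F ^ 2 * (2 * Fintype.card F) by ring] at this
  exact_mod_cast Nat.le_of_mul_le_mul_left this (by positivity)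

include hB hσ hQ in
theorem case5 (h2 : (2 : F) ≠ 0) (h3 : 3 ≤ Fintype.card F) (hno : NoIso σ B 5)
    (hk : 2 * Fintype.card F ^ 2 < K.card)
    (hU : (Fintype.card F : ℝ) * adjU B K ≤ (K.card:ℝ)^2 + K.card * (Fintype.card F:ℝ)^3 + K.card * Fintype.card F)
    (hT : ((Tset B K).card : ℝ) ≤ adjU B K * (Fintype.card F : ℝ)^2 + K.card * (Fintype.card F + 1) * (Fintype.card F : ℝ)^2) :
    (K.card:ℝ)*(K.card-1)*(K.card-2)*(K.card-3)*(K.card-4) - 2 * (Fintype.card F : ℝ)^2 * (K.card : ℝ)^4 ≤ (IndSet F K 5).card := by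
  classical
  have hq : (3:ℝ) ≤ Fintype.card F := by exact_mod_cast h3
  have hkq : 2 * (Fintype.card F : ℝ)^2 ≤ K.card := by exact_mod_cast hk.le
  have hkq' : Fintype.card F ≤ K.card := by nlinarith
  have hI3 := ind3_lower σ B hB K hσ hQ h2 hkq' h3
  have hM : ∀ x ∈ IndSet F K 3, ∀ p ∈ K, p ∉ Submodule.span F (Set.range x) →
      (cnt K (Submodule.span F (insert p (Set.range x))) : ℝ) ≤ 2 * (Fintype.card F : ℝ)^2 := by
    intro x hx p hp hpS
    have := cnt_noiso2 σ B hB K hσ hQ h2 hno (Submodule.span F (insert p (Set.range x))) p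
      (Submodule.subset_span (Set.mem_insert _ _)) hp (by rw [finrank_ind_insert hx hpS]; omega)
    rw [finrank_ind_insert hx hpS, show 2 * Fintype.card F ^ (3+1) = Fintype.card F ^ 2 * (2 * Fintype.card F^2) by ring] at this
    exact_mod_cast Nat.le_of_mul_le_mul_left this (by positivity)
  have htri : ∀ x ∈ IndSet F K 3, (K.card - (Fintype.card F : ℝ)^2) * (K.card - 2 * (Fintype.card F : ℝ)^2) ≤ wt F K x := by
    intro x hx
    exact wt_ge K x _ _ hkq (hM x hx) (by exact_mod_cast cnt_ind1 σ K hσ hx)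
  rcases le_or_gt (K.card : ℝ) (3 * (Fintype.card F : ℝ)^2) with hc | hc
  · refine fin5a _ _ (adjU B K) (Tset B K).card _ _ hq hkq hc hI3 ?_ hU hT
    rw [ind_card_succ2 K 3]
    have h1 : ∑ x ∈ IndSet F K 3, ((4*((Fintype.card F:ℝ)^2 - Fintype.card F)*(K.card - 2 * (Fintype.card F:ℝ)^2)) -
       ((K.card - 2 * (Fintype.card F:ℝ)^2)*(5*(Fintype.card F:ℝ)^2-4*Fintype.card F-K.card)) *
        (if B (x 0) (x 1) = 0 ∧ B (x 0) (x 2) = 0 ∧ B (x 1) (x 2) = 0 then 1 else 0)) ≤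
        ∑ x ∈ IndSet F K 3, wt F K x := by
      refine Finset.sum_le_sum fun x hx => ?_
      split_ifs with h
      · refine le_trans (le_of_eq ?_) (htri x hx)
        ring
      · have ha := cnt_nontri σ B hB K hσ hQ h2 hx h
        have hw := wt_pencil K hx _ hkq (hM x hx) (by nlinarith)
        have := mul_le_mul_of_nonneg_left ha (show (0:ℝ) ≤ 2 * (K.card - 2 * (Fintype.card F : ℝ)^2) by linarith)
        nlinarith
    refine le_trans (le_of_eq ?_) h1
    rw [Finset.sum_sub_distrib, Finset.sum_const, nsmul_eq_mul, ← Finset.mul_sum, Finset.sum_boole, Tset]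
    ring
  · refine fin5b _ _ (adjU B K) (Tset B K).card (Iset B K).card _ _ hq hc.le (by positivity) (goodmanI B hB K hQ h2) hI3 ?_ hU hT
    rw [ind_card_succ2 K 3]
    have h1 : ∑ x ∈ IndSet F K 3, ((K.card - 2 * (Fintype.card F:ℝ)) * (K.card - 2 * (Fintype.card F:ℝ)^2) +
       ((K.card - 2 * (Fintype.card F:ℝ)) * ((Fintype.card F:ℝ)^2 - Fintype.card F)) *
        (if B (x 0) (x 1) ≠ 0 ∧ B (x 0) (x 2) ≠ 0 ∧ B (x 1) (x 2) ≠ 0 then 1 else 0) -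
       (((Fintype.card F:ℝ)^2 - 2 * Fintype.card F) * (K.card - 2 * (Fintype.card F:ℝ)^2)) *
        (if B (x 0) (x 1) = 0 ∧ B (x 0) (x 2) = 0 ∧ B (x 1) (x 2) = 0 then 1 else 0)) ≤
        ∑ x ∈ IndSet F K 3, wt F K x := by
      refine Finset.sum_le_sum fun x hx => ?_
      by_cases h : B (x 0) (x 1) = 0 ∧ B (x 0) (x 2) = 0 ∧ B (x 1) (x 2) = 0
      · rw [if_neg (fun h' => h'.1 h.1), if_pos h]
        refine le_trans (le_of_eq ?_) (htri x hx)
        ring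
      have ha := cnt_nontri σ B hB K hσ hQ h2 hx h
      rw [if_neg h]
      split_ifs with h'
      · refine le_trans (le_of_eq ?_) (wt_ge K x _ ((Fintype.card F:ℝ)^2 + Fintype.card F) (by nlinarith) ?_ ha)
        · ring
        · intro p hp hpS
          have hK := (mem_IndSet.1 hx).1
          have hS : ∀ i, x i ∈ Submodule.span F (insert p (Set.range x)) := fun i => Submodule.subset_span (Set.mem_insert_of_mem _ ⟨i, rfl⟩)
          have := cnt_indep σ B hB K hσ hQ h2 _ (x 0) (x 1) (x 2) (hS 0) (hS 1) (hS 2) (hK 0) (hK 1) (hK 2) h'.1 h'.2.1 h'.2.2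
          rw [finrank_ind_insert hx hpS, show (Fintype.card F + 1) * Fintype.card F ^ (3+1) = Fintype.card F ^ 3 * (Fintype.card F^2 + Fintype.card F) by ring] at this
          exact_mod_cast Nat.le_of_mul_le_mul_left this (by positivity)
      · refine le_trans (le_of_eq ?_) (wt_ge K x _ _ hkq (hM x hx) ha)
        ring
    refine le_trans (le_of_eq ?_) h1
    rw [Finset.sum_sub_distrib, Finset.sum_add_distrib, Finset.sum_const, nsmul_eq_mul, ← Finset.mul_sum, Finset.sum_boole, ← Finset.mul_sum, Finset.sum_boole, Tset, Iset]
    ring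
end
end ADT

namespace ADT
open Module Matrix
set_option linter.unusedVariables false
set_option linter.unusedSectionVars false

section
variable {F : Type*} [Field F] [Fintype F] {d : ℕ}

theorem syscount {m : ℕ} (a : Fin m → (Fin d → F)) (ha : LinearIndependent F a) (c : Fin m → F) :
    Nat.card {v : Fin d → F // ∀ i, a i ⬝ᵥ v = c i} * Fintype.card F ^ m = Fintype.card F ^ d := by
  set f := (Matrix.of a).mulVecLin with hf
  have hr : finrank F (LinearMap.range f) = m := by
    have := LinearIndependent.rank_matrix (M := Matrix.of a) ha
    rw [Matrix.rank, Fintype.card_fin] at this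
    exact this
  have hsurj : LinearMap.range f = ⊤ := by
    apply Submodule.eq_top_of_finrank_eq
    rw [hr]; simp
  obtain ⟨v0, hv0⟩ := LinearMap.range_eq_top.1 hsurj c
  have hap : ∀ v i, f v i = a i ⬝ᵥ v := fun v i => rfl
  have e : {v : Fin d → F // ∀ i, a i ⬝ᵥ v = c i} ≃ LinearMap.ker f :=
    ⟨fun v => ⟨v.1 - v0, by
        rw [LinearMap.mem_ker, map_sub, sub_eq_zero, hv0]; funext i; rw [hap]; exact v.2 i⟩,
     fun u => ⟨u.1 + v0, fun i => by
        rw [← hap, map_add, hv0, LinearMap.mem_ker.1 u.2]; simp⟩,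
     fun v => by simp, fun u => by simp⟩
  rw [Nat.card_congr e, Module.natCard_eq_pow_finrank (K := F), Nat.card_eq_fintype_card, ← pow_add]
  congr 1
  have := LinearMap.finrank_range_add_finrank_ker f
  rw [hr] at this
  simp at this
  omega

/-- the homogenized bilinear form -/
def Bt (d : ℕ) (t : F) : (F × (Fin d → F)) →ₗ[F] (F × (Fin d → F)) →ₗ[F] F :=
  LinearMap.mk₂ F (fun w w' => w.2 ⬝ᵥ w'.2 - t * w.1 * w'.1)
    (by intro a b c; simp [add_dotProduct]; ring)
    (by intro a b c; simp; ring)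
    (by intro a b c; simp [dotProduct_add]; ring)
    (by intro a b c; simp; ring)

theorem Bt_apply (t : F) (w w' : F × (Fin d → F)) : Bt d t w w' = w.2 ⬝ᵥ w'.2 - t * w.1 * w'.1 := rfl

theorem Bt_symm (t : F) (w w' : F × (Fin d → F)) : Bt d t w w' = Bt d t w' w := by
  rw [Bt_apply, Bt_apply, dotProduct_comm]; ring

theorem tiso (t : F) (ht : t ≠ 0) {m : ℕ} (u : Fin m → (Fin d → F)) (hu : LinearIndependent F u)
    (h0 : ∀ i j, u i ⬝ᵥ u j = 0) (a : Fin d → F) (ha : a ⬝ᵥ a = t) (hua : ∀ i, u i ⬝ᵥ a = 0) : 2 * m + 1 ≤ d := by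
  have h := syscount u hu 0
  have hli : LinearIndependent F (Fin.snoc u a : Fin (m+1) → (Fin d → F)) := by
    rw [linearIndependent_finSnoc]
    refine ⟨hu, fun hmem => ht ?_⟩
    rw [← ha]
    refine Submodule.span_induction (p := fun x _ => x ⬝ᵥ a = 0) ?_ ?_ ?_ ?_ hmem
    · rintro _ ⟨i, rfl⟩; exact hua i
    · simp
    · intro x y _ _ hx hy; rw [add_dotProduct, hx, hy, add_zero]
    · intro c x _ hx; rw [smul_dotProduct, hx, smul_zero]
  set S := Submodule.span F (Set.range (Fin.snoc u a : Fin (m+1) → (Fin d → F))) with hS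
  have hfr : finrank F S = m + 1 := by rw [hS, finrank_span_eq_card hli]; simp
  have hle : Nat.card S ≤ Nat.card {v : Fin d → F // ∀ i, u i ⬝ᵥ v = (0 : Fin m → F) i} := by
    refine Nat.card_le_card_of_injective (fun s => ⟨s.1, fun i => ?_⟩) ?_
    · refine Submodule.span_induction (p := fun x _ => u i ⬝ᵥ x = 0) ?_ ?_ ?_ ?_ s.2
      · rintro _ ⟨j, rfl⟩
        refine Fin.lastCases ?_ (fun j => ?_) j
        · simpa using hua i
        · simpa using h0 i j
      · simp
      · intro x y _ _ hx hy; rw [dotProduct_add, hx, hy, add_zero]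
      · intro c x _ hx; rw [dotProduct_smul, hx, smul_zero]
    · intro s s' h; apply Subtype.ext; have h' := congrArg Subtype.val h; exact h'
  rw [Module.natCard_eq_pow_finrank (K := F), hfr, Nat.card_eq_fintype_card (α := F)] at hle
  have h2 := Nat.mul_le_mul_right (Fintype.card F ^ m) hle
  rw [h, ← pow_add] at h2
  have := (Nat.pow_le_pow_iff_right (Fintype.one_lt_card (α := F))).1 h2
  omega

theorem noiso (h2 : (2:F) ≠ 0) (t : F) (ht : t ≠ 0) : NoIso (LinearMap.fst F F (Fin d → F)) (Bt d t) d := by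
  intro S a haS ha hiso
  set V0 := S.comap (LinearMap.inr F F (Fin d → F)) with hV0
  have ha1 : a.1 = 1 := ha
  have haa : a.2 ⬝ᵥ a.2 = t := by
    have := hiso a haS ha
    rw [Bt_apply, ha1] at this; linear_combination this
  have hmem : ∀ u, u ∈ V0 ↔ ((0:F), u) ∈ S := fun u => Iff.rfl
  have key : ∀ u ∈ V0, 2 * (u ⬝ᵥ a.2) + u ⬝ᵥ u = 0 := by
    intro u hu
    have := hiso (a + (0, u)) (S.add_mem haS hu) (by simp [ha1])
    rw [Bt_apply] at this
    simp [ha1, add_dotProduct, dotProduct_add, dotProduct_comm a.2 u, haa] at this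
    linear_combination this
  have k0 : ∀ u ∈ V0, u ⬝ᵥ a.2 = 0 := by
    intro u hu
    have h1 := key u hu
    have h3 := key (-u) (V0.neg_mem hu)
    simp at h3
    have : (2 * 2) * (u ⬝ᵥ a.2) = 0 := by linear_combination h1 - h3
    exact (mul_eq_zero.1 this).resolve_left (mul_ne_zero h2 h2)
  have k1 : ∀ u ∈ V0, u ⬝ᵥ u = 0 := by
    intro u hu; have := key u hu; rw [k0 u hu] at this; simpa using this
  have k2 : ∀ u ∈ V0, ∀ v ∈ V0, u ⬝ᵥ v = 0 := by
    intro u hu v hv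
    have := k1 _ (V0.add_mem hu hv)
    simp [add_dotProduct, dotProduct_add, k1 u hu, k1 v hv, dotProduct_comm v u] at this
    have : 2 * (u ⬝ᵥ v) = 0 := by linear_combination this
    exact (mul_eq_zero.1 this).resolve_left h2
  let b := Module.finBasis F V0
  have h3 := tiso t ht (fun i => (b i : Fin d → F)) (b.linearIndependent.map' V0.subtype (Submodule.ker_subtype _))
    (fun i j => k2 _ (b i).2 _ (b j).2) a.2 haa (fun i => k0 _ (b i).2)
  have h4 := LinearMap.finrank_range_add_finrank_ker ((LinearMap.fst F F (Fin d → F)).domRestrict S)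
  have h5 : finrank F (LinearMap.range ((LinearMap.fst F F (Fin d → F)).domRestrict S)) ≤ 1 := by
    have := Submodule.finrank_le (LinearMap.range ((LinearMap.fst F F (Fin d → F)).domRestrict S))
    simpa using this
  have h6 : finrank F (LinearMap.ker ((LinearMap.fst F F (Fin d → F)).domRestrict S)) ≤ finrank F V0 := by
    let g : LinearMap.ker ((LinearMap.fst F F (Fin d → F)).domRestrict S) →ₗ[F] V0 :=
      LinearMap.codRestrict V0 ((LinearMap.snd F F (Fin d → F)).comp (S.subtype.comp (Submodule.subtype _))) (by
        rintro ⟨⟨⟨s, v⟩, hs⟩, hk⟩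
        have : s = 0 := hk
        subst this
        exact hs)
    refine LinearMap.finrank_le_finrank_of_injective (f := g) ?_
    rintro ⟨⟨⟨s, v⟩, hs⟩, hk⟩ ⟨⟨⟨s', v'⟩, hs'⟩, hk'⟩ h
    have e1 : s = 0 := hk
    have e2 : s' = 0 := hk'
    have e3 : v = v' := congrArg Subtype.val h
    subst e1 e2 e3; rfl
  omega
end
end ADT

namespace ADT
open Module Matrix
set_option linter.unusedVariables false
set_option linter.unusedSectionVars false

section
variable {F : Type*} [Field F] [Fintype F] {d : ℕ}
variable (n : Fin d → F) (ν t : F)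

theorem dep3 {p p' : Fin d → F} (h1 : LinearIndependent F ![n, p]) (h : ¬ LinearIndependent F ![n, p, p']) :
    ∃ α β : F, p' = α • n + β • p := by
  have e : (![n, p, p'] : Fin 3 → (Fin d → F)) = Fin.snoc ![n, p] p' := by
    funext i; fin_cases i <;> rfl
  rw [e] at h
  have h' := mt linearIndependent_finSnoc.2 h
  rw [not_and, not_not] at h'
  have h3 := h' h1
  rw [Matrix.range_cons_cons_empty, Submodule.mem_span_pair] at h3
  obtain ⟨a, b, hab⟩ := h3
  exact ⟨a, b, hab.symm⟩

theorem on_line (ht : t ≠ 0) {p p' v : Fin d → F} (h1 : LinearIndependent F ![n, p])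
    (h : ¬ LinearIndependent F ![n, p, p'])
    (hv : n ⬝ᵥ v = ν) (hpv : p ⬝ᵥ v = t) (hpv' : p' ⬝ᵥ v = t) : ∃ α : F, p' = p + α • (n - (ν / t) • p) := by
  obtain ⟨α, β, rfl⟩ := dep3 n h1 h
  refine ⟨α, ?_⟩
  simp only [add_dotProduct, smul_dotProduct, hv, hpv, smul_eq_mul] at hpv'
  have : β = 1 - α * (ν / t) := by
    field_simp; linear_combination hpv'
  rw [this]
  module

open Classical in
theorem cnt_T2 {e : ℕ} (hd : d = e + 3) {p : Fin d → F} (h1 : LinearIndependent F ![n, p]) :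
    (Finset.univ.filter fun v => n ⬝ᵥ v = ν ∧ p ⬝ᵥ v = t).card = Fintype.card F ^ (e+1) := by
  have h := syscount ![n, p] h1 ![ν, t]
  simp only [Fin.forall_fin_two, Matrix.cons_val_zero, Matrix.cons_val_one] at h
  rw [Nat.card_eq_fintype_card, Fintype.card_subtype] at h
  have h' : Fintype.card F ^ d = Fintype.card F ^ (e+1) * Fintype.card F ^ 2 := by rw [hd, ← pow_add]
  exact Nat.eq_of_mul_eq_mul_right (pow_pos Fintype.card_pos 2) (h.trans h')

open Classical in
theorem cnt_T3 {e : ℕ} (hd : d = e + 3) {p p' : Fin d → F} (h1 : LinearIndependent F ![n, p, p']) :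
    (Finset.univ.filter fun v => n ⬝ᵥ v = ν ∧ p ⬝ᵥ v = t ∧ p' ⬝ᵥ v = t).card = Fintype.card F ^ e := by
  have h := syscount ![n, p, p'] h1 ![ν, t, t]
  simp only [Fin.forall_fin_succ, Fin.forall_fin_zero, and_true, Matrix.cons_val_zero, Matrix.cons_val_one, Matrix.cons_val_succ] at h
  rw [Nat.card_eq_fintype_card, Fintype.card_subtype] at h
  have h' : Fintype.card F ^ d = Fintype.card F ^ (e) * Fintype.card F ^ 3 := by rw [hd, ← pow_add]
  exact Nat.eq_of_mul_eq_mul_right (pow_pos Fintype.card_pos 3) (h.trans h')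

open Classical in
theorem cnt_H {e : ℕ} (hd : d = e + 3) (hn : n ≠ 0) :
    (Finset.univ.filter fun v => n ⬝ᵥ v = ν).card = Fintype.card F ^ (e+2) := by
  have h := syscount ![n] (LinearIndependent.of_subsingleton 0 (by simpa using hn)) ![ν]
  simp only [Fin.forall_fin_one, Matrix.cons_val_zero] at h
  rw [Nat.card_eq_fintype_card, Fintype.card_subtype] at h
  have h' : Fintype.card F ^ d = Fintype.card F ^ (e+2) * Fintype.card F ^ 1 := by rw [hd, ← pow_add]
  exact Nat.eq_of_mul_eq_mul_right (pow_pos Fintype.card_pos 1) (h.trans h')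

open Classical in
theorem second {e : ℕ} (hd : d = e + 3) (ht : t ≠ 0) (hn : n ≠ 0) (P : Finset (Fin d → F))
    (hP : ∀ p ∈ P, n ⬝ᵥ p = ν) (hLI : ∀ p ∈ P, LinearIndependent F ![n, p]) (μ : ℝ)
    (hμ : ∀ p ∈ P, ((P.filter fun p' => ∃ α : F, p' = p + α • (n - (ν / t) • p)).card : ℝ) ≤ μ) :
    (∑ v ∈ P, ∑ p ∈ P, (if p ⬝ᵥ v = t then (1:ℝ) else 0) - (P.card:ℝ)^2 / Fintype.card F)^2 ≤
      (P.card:ℝ)^2 * (μ * ((Fintype.card F:ℝ)^(e+1) - (Fintype.card F:ℝ)^e)) := by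
  set q : ℝ := (Fintype.card F : ℝ) with hq
  have hq1 : 1 < q := by rw [hq]; exact_mod_cast Fintype.one_lt_card
  set k : ℝ := (P.card : ℝ) with hk
  set H : Finset (Fin d → F) := Finset.univ.filter fun v => n ⬝ᵥ v = ν with hH
  set N : (Fin d → F) → ℝ := fun v => ∑ p ∈ P, (if p ⬝ᵥ v = t then (1:ℝ) else 0) with hN
  have hHc : (H.card : ℝ) = q^(e+2) := by rw [hH, cnt_H n ν hd hn, hq]; push_cast; rfl
  have S1 : ∑ v ∈ H, N v = k * q^(e+1) := by
    rw [hN, Finset.sum_comm, hk, ← nsmul_eq_mul]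
    refine Finset.sum_eq_card_nsmul fun p hp => ?_
    rw [Finset.sum_boole, hH, Finset.filter_filter, cnt_T2 n ν t hd (hLI p hp)]
    push_cast; rfl
  have hq2 : 0 ≤ q^(e+1) - q^e := by
    rw [pow_succ]; nlinarith [pow_pos (show 0 < q by linarith) e]
  have S2 : ∑ v ∈ H, N v ^ 2 ≤ k^2 * q^e + k * (μ * (q^(e+1) - q^e)) := by
    have a1 : ∑ v ∈ H, N v ^ 2 = ∑ p ∈ P, ∑ p' ∈ P, ∑ v ∈ H, (if p ⬝ᵥ v = t then (1:ℝ) else 0) * (if p' ⬝ᵥ v = t then (1:ℝ) else 0) := by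
      simp only [hN, sq, Finset.sum_mul_sum]
      rw [Finset.sum_comm]
      exact Finset.sum_congr rfl fun p _ => Finset.sum_comm
    rw [a1]
    have a2 : ∀ p ∈ P, ∑ p' ∈ P, ∑ v ∈ H, (if p ⬝ᵥ v = t then (1:ℝ) else 0) * (if p' ⬝ᵥ v = t then (1:ℝ) else 0)
        ≤ k * q^e + μ * (q^(e+1) - q^e) := by
      intro p hp
      have a3 : ∀ p' ∈ P, ∑ v ∈ H, (if p ⬝ᵥ v = t then (1:ℝ) else 0) * (if p' ⬝ᵥ v = t then (1:ℝ) else 0) ≤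
          q^e + (q^(e+1) - q^e) * (if ∃ α : F, p' = p + α • (n - (ν / t) • p) then (1:ℝ) else 0) := by
        intro p' hp'
        have a4 : ∑ v ∈ H, (if p ⬝ᵥ v = t then (1:ℝ) else 0) * (if p' ⬝ᵥ v = t then (1:ℝ) else 0) =
            ((Finset.univ.filter fun v => n ⬝ᵥ v = ν ∧ p ⬝ᵥ v = t ∧ p' ⬝ᵥ v = t).card : ℝ) := by
          rw [← Finset.filter_filter, ← hH, ← Finset.sum_boole]
          refine Finset.sum_congr rfl fun v _ => ?_
          by_cases b1 : p ⬝ᵥ v = t <;> by_cases b2 : p' ⬝ᵥ v = t <;> simp [b1, b2]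
        rw [a4]
        by_cases hl : LinearIndependent F ![n, p, p']
        · rw [cnt_T3 n ν t hd hl]
          push_cast
          split_ifs
          · linarith
          · rw [hq]; linarith
        · split_ifs with h
          · have : (Finset.univ.filter fun v => n ⬝ᵥ v = ν ∧ p ⬝ᵥ v = t ∧ p' ⬝ᵥ v = t).card ≤ Fintype.card F^(e+1) := by
              rw [← cnt_T2 n ν t hd (hLI p hp)]
              exact Finset.card_le_card (Finset.monotone_filter_right _ fun v _ hv => ⟨hv.1, hv.2.1⟩)
            have : ((Finset.univ.filter fun v => n ⬝ᵥ v = ν ∧ p ⬝ᵥ v = t ∧ p' ⬝ᵥ v = t).card : ℝ) ≤ q^(e+1) := by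
              rw [hq]; exact_mod_cast this
            linarith
          · have : (Finset.univ.filter fun v => n ⬝ᵥ v = ν ∧ p ⬝ᵥ v = t ∧ p' ⬝ᵥ v = t) = ∅ := by
              rw [Finset.filter_eq_empty_iff]
              intro v _ hv
              exact h (on_line n ν t ht (hLI p hp) hl hv.1 hv.2.1 hv.2.2)
            rw [this]; simp; positivity
      refine (Finset.sum_le_sum a3).trans ?_
      rw [Finset.sum_add_distrib, Finset.sum_const, nsmul_eq_mul, ← Finset.mul_sum, Finset.sum_boole, mul_comm μ]
      have := mul_le_mul_of_nonneg_left (hμ p hp) hq2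
      linarith
    refine (Finset.sum_le_sum a2).trans (le_of_eq ?_)
    rw [Finset.sum_const, nsmul_eq_mul]; ring
  have S3 : ∑ v ∈ H, (N v - k / q)^2 ≤ k * (μ * (q^(e+1) - q^e)) := by
    have : ∑ v ∈ H, (N v - k / q)^2 = ∑ v ∈ H, N v ^ 2 - 2 * (k/q) * ∑ v ∈ H, N v + H.card * (k/q)^2 := by
      rw [Finset.mul_sum, ← nsmul_eq_mul, ← Finset.sum_const, ← Finset.sum_sub_distrib, ← Finset.sum_add_distrib]
      exact Finset.sum_congr rfl fun v _ => by ring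
    rw [this, S1, hHc]
    have e1 : 2 * (k/q) * (k * q^(e+1)) = 2 * (k^2 * q^e) := by rw [pow_succ]; field_simp
    have e2 : q^(e+2) * (k/q)^2 = k^2*q^e := by rw [pow_add]; field_simp
    rw [e1, e2]; linarith
  have S4 : ∑ v ∈ P, (N v - k / q)^2 ≤ ∑ v ∈ H, (N v - k / q)^2 := by
    refine Finset.sum_le_sum_of_subset_of_nonneg ?_ fun _ _ _ => sq_nonneg _
    intro p hp
    rw [hH, Finset.mem_filter]; exact ⟨Finset.mem_univ _, hP p hp⟩
  have S5 : (∑ v ∈ P, (N v - k / q))^2 ≤ k * ∑ v ∈ P, (N v - k / q)^2 := sq_sum_le_card_mul_sum_sq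
  have S6 : ∑ v ∈ P, (N v - k / q) = ∑ v ∈ P, N v - k^2/q := by
    rw [Finset.sum_sub_distrib, Finset.sum_const, nsmul_eq_mul]; ring
  rw [S6] at S5
  refine S5.trans ?_
  have hk0 : 0 ≤ k := by positivity
  calc _ ≤ k * (k * (μ * (q^(e+1) - q^e))) := mul_le_mul_of_nonneg_left (S4.trans S3) hk0
    _ = _ := by ring
end
end ADT

namespace ADT
open Module Matrix
set_option linter.unusedVariables false
set_option linter.unusedSectionVars false

section
variable {F : Type*} [Field F] [Fintype F] {d : ℕ}

open Classical in
theorem pairs_card {V : Type*} (P : Finset V) (R : V → V → Prop) :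
    (P.offDiag.filter fun p => R p.1 p.2).card = ∑ p ∈ P, (P.filter fun p' => p ≠ p' ∧ R p p').card := by
  have : (P.offDiag.filter fun p => R p.1 p.2) = (P ×ˢ P).filter fun p => p.1 ≠ p.2 ∧ R p.1 p.2 := by
    ext p; simp [Finset.mem_offDiag]; tauto
  rw [this, Finset.card_filter, Finset.sum_product]
  exact Finset.sum_congr rfl fun p _ => by rw [Finset.card_filter]

open Classical in
/-- number of ordered adjacent pairs -/
noncomputable def adjP (t : F) (P : Finset (Fin d → F)) : ℕ :=
  (P.offDiag.filter fun p => p.1 ⬝ᵥ p.2 = t).card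

open Classical in
theorem sum_adj (t : F) (P : Finset (Fin d → F)) (hP : ∀ p ∈ P, p ⬝ᵥ p = t) :
    ∑ v ∈ P, ∑ p ∈ P, (if p ⬝ᵥ v = t then (1:ℝ) else 0) = adjP t P + P.card := by
  rw [adjP, pairs_card P fun p p' => p ⬝ᵥ p' = t]
  push_cast
  have : (P.card : ℝ) = ∑ v ∈ P, (1:ℝ) := by simp
  rw [this, ← Finset.sum_add_distrib]
  refine Finset.sum_congr rfl fun v hv => ?_
  have e1 : (1:ℝ) = ∑ p ∈ P, if p = v then (1:ℝ) else 0 := by simp [hv]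
  rw [← Finset.sum_boole]
  refine Eq.trans ?_ (congrArg₂ (· + ·) rfl e1.symm)
  rw [← Finset.sum_add_distrib]
  refine Finset.sum_congr rfl fun p hp => ?_
  by_cases h : p = v
  · subst h; simp [hP p hp]
  · simp [h, Ne.symm h, dotProduct_comm p v]

variable (n : Fin d → F) (ν t : F)

theorem apex (h2 : (2:F) ≠ 0) (hn : n ≠ 0) (hnn : n ⬝ᵥ n = 2 * ν) (ht : t ≠ 0) {p : Fin d → F}
    (h1 : n ⬝ᵥ p = ν) (h3 : p ⬝ᵥ p = t) (h : ¬ LinearIndependent F ![n, p]) :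
    p = (2:F)⁻¹ • n ∧ ν ≠ 0 ∧ ν = 2 * t := by
  rw [LinearIndependent.pair_iff' hn] at h
  push Not at h
  obtain ⟨c, rfl⟩ := h
  simp only [dotProduct_smul, smul_dotProduct, smul_eq_mul, hnn] at h1 h3
  have hν : ν ≠ 0 := by rintro rfl; apply ht; rw [← h3]; ring
  have hc : c * 2 = 1 := mul_right_cancel₀ hν (by linear_combination h1)
  refine ⟨by rw [eq_inv_of_mul_eq_one_left hc], hν, ?_⟩
  rw [← h3]
  linear_combination (-ν) * (1 + 2 * c) * hc

open Classical in
theorem line_card (p w : Fin d → F) (P : Finset (Fin d → F)) :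
    (P.filter fun p' => ∃ α : F, p' = p + α • w).card ≤ Fintype.card F := by
  have : (P.filter fun p' => ∃ α : F, p' = p + α • w) ⊆ (Finset.univ : Finset F).image fun α => p + α • w := by
    intro x hx
    obtain ⟨_, α, rfl⟩ := Finset.mem_filter.1 hx
    exact Finset.mem_image_of_mem _ (Finset.mem_univ _)
  exact (Finset.card_le_card this).trans Finset.card_image_le

open Classical in
theorem line_card' (p w : Fin d → F) (P : Finset (Fin d → F)) (hp : p ∈ P) :
    (P.filter fun p' => p ≠ p' ∧ ∃ α : F, p' = p + α • w).card + 1 ≤ Fintype.card F := by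
  refine le_trans ?_ (line_card p w P)
  have : insert p (P.filter fun p' => p ≠ p' ∧ ∃ α : F, p' = p + α • w) ⊆ (P.filter fun p' => ∃ α : F, p' = p + α • w) := by
    intro x hx
    rw [Finset.mem_insert] at hx
    rcases hx with rfl | hx
    · exact Finset.mem_filter.2 ⟨hp, 0, by simp⟩
    · rw [Finset.mem_filter] at hx ⊢; exact ⟨hx.1, hx.2.2⟩
  refine le_trans (le_of_eq ?_) (Finset.card_le_card this)
  rw [Finset.card_insert_of_notMem (by simp)]

variable (h2 : (2:F) ≠ 0) (hn : n ≠ 0) (hnn : n ⬝ᵥ n = 2 * ν) (ht : t ≠ 0) (P : Finset (Fin d → F))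
  (hP : ∀ p ∈ P, n ⬝ᵥ p = ν ∧ p ⬝ᵥ p = t)

open Classical in
include h2 hn hnn ht hP in
/-- if each non-apex point has at most q-1 related points, the number of related pairs is at most kq -/
theorem rel_bound (R : (Fin d → F) → (Fin d → F) → Prop)
    (hR : ∀ p ∈ P, LinearIndependent F ![n, p] → (P.filter fun p' => p ≠ p' ∧ R p p').card + 1 ≤ Fintype.card F) :
    (P.offDiag.filter fun p => R p.1 p.2).card ≤ P.card * Fintype.card F := by
  rw [pairs_card]
  set a := (2:F)⁻¹ • n
  have hq := Fintype.one_lt_card (α := F)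
  have h1 : ∀ p ∈ P, (P.filter fun p' => p ≠ p' ∧ R p p').card ≤ (Fintype.card F - 1) + if p = a then P.card else 0 := by
    intro p hp
    by_cases h : LinearIndependent F ![n, p]
    · have := hR p hp h; omega
    · have := (apex n ν t h2 hn hnn ht (hP p hp).1 (hP p hp).2 h).1
      rw [if_pos this]
      exact (Finset.card_filter_le _ _).trans (Nat.le_add_left _ _)
  refine (Finset.sum_le_sum fun p hp => le_trans (le_of_eq (by congr)) (h1 p hp)).trans ?_
  rw [Finset.sum_add_distrib, Finset.sum_const, smul_eq_mul, Finset.sum_ite_eq']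
  have : (if a ∈ P then P.card else 0) ≤ P.card := by split_ifs <;> simp
  calc _ ≤ P.card * (Fintype.card F - 1) + P.card := Nat.add_le_add_left this _
    _ = P.card * (Fintype.card F - 1 + 1) := by ring
    _ = _ := by rw [Nat.sub_add_cancel hq.le]

include h2 hn hnn ht hP in
theorem U4_iso (hd : d = 4) (hν : ν = 0 ∨ ν = 2 * t) : adjP t P ≤ P.card * Fintype.card F := by
  classical
  refine rel_bound n ν t h2 hn hnn ht P hP (fun p p' => p ⬝ᵥ p' = t) ?_
  intro p hp hli
  refine le_trans (Nat.add_le_add_right (Finset.card_le_card ?_) 1) (line_card' p (n - (ν/t) • p) P hp)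
  intro p' hp'
  rw [Finset.mem_filter] at hp' ⊢
  obtain ⟨hp', hne, hpp⟩ := hp'
  refine ⟨hp', hne, ?_⟩
  obtain ⟨a1, a2⟩ := hP p hp
  obtain ⟨b1, b2⟩ := hP p' hp'
  by_contra hcon
  have hpn : p ⬝ᵥ n = ν := by rw [dotProduct_comm, a1]
  have hpn' : p' ⬝ᵥ n = ν := by rw [dotProduct_comm, b1]
  have hpp' : p' ⬝ᵥ p = t := by rw [dotProduct_comm, hpp]
  have hw0 : n - (ν/t) • p ≠ 0 := by
    intro h
    rw [sub_eq_zero] at h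
    have := LinearIndependent.pair_iff.1 hli 1 (-(ν/t)) (by rw [one_smul, neg_smul, ← h]; simp)
    exact one_ne_zero this.1
  have hli2 : LinearIndependent F ![n - (ν/t) • p, p' - p] := by
    rw [LinearIndependent.pair_iff' hw0]
    intro α hα
    exact hcon ⟨α, by rw [hα]; abel⟩
  have hww : (n - (ν/t) • p) ⬝ᵥ (n - (ν/t) • p) = 0 := by
    simp only [sub_dotProduct, dotProduct_sub, smul_dotProduct, dotProduct_smul, hnn, a1, a2, hpn, smul_eq_mul]
    rcases hν with rfl | rfl
    · simp
    · field_simp; ring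
  have hwu : (n - (ν/t) • p) ⬝ᵥ (p' - p) = 0 := by
    simp only [sub_dotProduct, dotProduct_sub, smul_dotProduct, dotProduct_smul, hnn, a1, a2, b1, hpp, smul_eq_mul]; ring
  have huu : (p' - p) ⬝ᵥ (p' - p) = 0 := by
    simp only [sub_dotProduct, dotProduct_sub, a2, b2, hpp, hpp']; ring
  have hwp : (n - (ν/t) • p) ⬝ᵥ p = 0 := by
    simp only [sub_dotProduct, smul_dotProduct, a1, a2, smul_eq_mul]; field_simp; ring
  have hup : (p' - p) ⬝ᵥ p = 0 := by
    simp only [sub_dotProduct, hpp', a2]; ring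
  have := tiso t ht ![n - (ν/t) • p, p' - p] hli2 (by
    intro i j
    fin_cases i <;> fin_cases j
    · exact hww
    · exact hwu
    · exact (dotProduct_comm _ _).trans hwu
    · exact huu) p a2 (by
    intro i
    fin_cases i
    · exact hwp
    · exact hup)
  omega

include h2 hn hnn ht hP in
theorem U4_non (hd : d = 4) (h0 : ν ≠ 0) (h20 : ν ≠ 2 * t) :
    (Fintype.card F : ℝ) * (adjP t P : ℝ) ≤ (P.card:ℝ)^2 + P.card * Fintype.card F * (Fintype.card F - 1) := by
  classical
  have hLI : ∀ p ∈ P, LinearIndependent F ![n, p] := by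
    intro p hp
    by_contra h
    exact h20 (apex n ν t h2 hn hnn ht (hP p hp).1 (hP p hp).2 h).2.2
  have h := second n ν t (e := 1) hd ht hn P (fun p hp => (hP p hp).1) hLI 1 (by
    intro p hp
    have : (P.filter fun p' => ∃ α : F, p' = p + α • (n - (ν / t) • p)) ⊆ {p} := by
      intro p' hp'
      obtain ⟨hp', α, hα⟩ := Finset.mem_filter.1 hp'
      rw [Finset.mem_singleton]
      obtain ⟨a1, a2⟩ := hP p hp
      obtain ⟨b1, b2⟩ := hP p' hp'
      have hpn : p ⬝ᵥ n = ν := by rw [dotProduct_comm, a1]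
      rw [hα] at b2
      simp only [add_dotProduct, dotProduct_add, sub_dotProduct, dotProduct_sub, smul_dotProduct, dotProduct_smul, hnn, a1, a2, hpn, smul_eq_mul] at b2
      have : α * α * (ν * (2 * t - ν)) = 0 := by
        field_simp at b2; linear_combination b2
      have : α = 0 := by
        rcases mul_eq_zero.1 this with h | h
        · exact mul_self_eq_zero.1 h
        · rcases mul_eq_zero.1 h with h | h
          · exact absurd h h0
          · exact absurd (sub_eq_zero.1 h).symm h20
      rw [hα, this]; simp
    have := Finset.card_le_card this
    rw [Finset.card_singleton] at this
    exact_mod_cast this)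
  rw [sum_adj t P fun p hp => (hP p hp).2] at h
  set q : ℝ := (Fintype.card F : ℝ) with hq
  have hq1 : 1 < q := by rw [hq]; exact_mod_cast Fintype.one_lt_card
  set k : ℝ := (P.card : ℝ)
  have hk : 0 ≤ k := by positivity
  have h' : (adjP t P + k - k^2/q)^2 ≤ (k * q)^2 := by
    refine h.trans ?_
    have : k^2 * (q^2 - q) ≤ k^2*q^2 := by nlinarith [sq_nonneg k]
    calc _ = k^2 * (q^2 - q) := by ring
      _ ≤ _ := this
      _ = _ := by ring
  have h3 := abs_le_of_sq_le_sq' h' (by positivity) |>.2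
  have h4 := mul_le_mul_of_nonneg_left h3 (show 0 ≤ q by linarith)
  have h5 : q * (adjP t P + k - k^2/q) = q * adjP t P + q * k - k^2 := by field_simp
  rw [h5] at h4
  nlinarith

include h2 hn hnn ht hP in
theorem U4 (hd : d = 4) (hk : 2 * Fintype.card F < P.card) :
    (Fintype.card F : ℝ) * (adjP t P : ℝ) ≤ (P.card:ℝ)^2 + P.card * Fintype.card F * (Fintype.card F - 1) := by
  by_cases h : ν = 0 ∨ ν = 2 * t
  · have h1 := U4_iso n ν t h2 hn hnn ht P hP hd h
    have h1' : (adjP t P : ℝ) ≤ P.card * Fintype.card F := by exact_mod_cast h1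
    have hk' : 2 * (Fintype.card F : ℝ) < P.card := by exact_mod_cast hk
    have hq : (0:ℝ) ≤ Fintype.card F := by positivity
    have hkk : (0:ℝ) ≤ P.card := by positivity
    have := mul_le_mul_of_nonneg_left h1' hq
    nlinarith [mul_nonneg hkk hq]
  · push Not at h
    exact U4_non n ν t h2 hn hnn ht P hP hd h.1 h.2

include h2 hn hnn ht hP in
theorem U5 (hd : d = 5) :
    (Fintype.card F : ℝ) * (adjP t P : ℝ) ≤ (P.card:ℝ)^2 + P.card * (Fintype.card F:ℝ)^3 + P.card * Fintype.card F := by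
  classical
  set P' := P.filter fun p => LinearIndependent F ![n, p] with hP'
  have h := second n ν t (e := 2) hd ht hn P' (fun p hp => (hP p (Finset.mem_filter.1 hp).1).1)
    (fun p hp => (Finset.mem_filter.1 hp).2) (Fintype.card F) (by
      intro p hp
      exact_mod_cast line_card p _ P')
  rw [sum_adj t P' fun p hp => (hP p (Finset.mem_filter.1 hp).1).2] at h
  have hsub : adjP t P ≤ adjP t P' + 2 * P'.card := by
    set a := (2:F)⁻¹ • n with ha
    have hap : ∀ p ∈ P, p ∉ P' → p = a := by
      intro p hp hp'
      exact (apex n ν t h2 hn hnn ht (hP p hp).1 (hP p hp).2 fun h => hp' (Finset.mem_filter.2 ⟨hp, h⟩)).1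
    have : (P.offDiag.filter fun p => p.1 ⬝ᵥ p.2 = t) ⊆ (P'.offDiag.filter fun p => p.1 ⬝ᵥ p.2 = t) ∪ (({a} ×ˢ P') ∪ (P' ×ˢ {a})) := by
      rintro ⟨x, y⟩ hxy
      simp only [Finset.mem_filter, Finset.mem_offDiag] at hxy
      obtain ⟨⟨hx, hy, hne⟩, hxy⟩ := hxy
      simp only [Finset.mem_union, Finset.mem_filter, Finset.mem_offDiag, Finset.mem_product, Finset.mem_singleton]
      by_cases h1 : x ∈ P' <;> by_cases h3 : y ∈ P'
      · exact Or.inl ⟨⟨h1, h3, hne⟩, hxy⟩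
      · exact Or.inr (Or.inr ⟨h1, hap y hy h3⟩)
      · exact Or.inr (Or.inl ⟨hap x hx h1, h3⟩)
      · exact absurd ((hap x hx h1).trans (hap y hy h3).symm) hne
    refine (Finset.card_le_card this).trans ((Finset.card_union_le _ _).trans ?_)
    refine Nat.add_le_add_left ((Finset.card_union_le _ _).trans ?_) _
    rw [Finset.card_product, Finset.card_product, Finset.card_singleton]; omega
  have hkk : P'.card ≤ P.card := Finset.card_filter_le _ _
  have hsub' : (adjP t P : ℝ) ≤ adjP t P' + 2 * P'.card := by exact_mod_cast hsub
  have hkk' : (P'.card : ℝ) ≤ P.card := by exact_mod_cast hkk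
  set q : ℝ := (Fintype.card F : ℝ) with hq
  have hq1 : 1 < q := by rw [hq]; exact_mod_cast Fintype.one_lt_card
  set k : ℝ := (P'.card : ℝ)
  have hk : 0 ≤ k := by positivity
  have h' : (adjP t P' + k - k^2/q)^2 ≤ (k * q^2)^2 := by
    refine h.trans ?_
    have : k^2 * (q * (q^3 - q^2)) ≤ k^2*q^4 := by
      refine mul_le_mul_of_nonneg_left ?_ (sq_nonneg k)
      nlinarith [pow_pos (show 0 < q by linarith) 3]
    calc _ = k^2 * (q * (q^3 - q^2)) := by ring
      _ ≤ _ := this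
      _ = _ := by ring
  have h3 := abs_le_of_sq_le_sq' h' (by positivity) |>.2
  have h4 := mul_le_mul_of_nonneg_left h3 (show 0 ≤ q by linarith)
  have h5 : q * (adjP t P' + k - k^2/q) = q * adjP t P' + q * k - k^2 := by field_simp
  rw [h5] at h4
  have h6 := mul_le_mul_of_nonneg_left hsub' (show 0 ≤ q by linarith)
  calc q * (adjP t P:ℝ) ≤ k^2 + k * q^3 + k * q := by nlinarith
    _ ≤ _ := by gcongr
end
end ADT

namespace ADT
open Module Matrix
set_option linter.unusedVariables false
set_option linter.unusedSectionVars false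

section
variable {F : Type*} [Field F] [Fintype F] {d : ℕ}

def hom {m : ℕ} (a : Fin m → (Fin d → F)) (c : Fin m → F) : (F × (Fin d → F)) →ₗ[F] (Fin m → F) :=
  (Matrix.of a).mulVecLin.comp (LinearMap.snd F F (Fin d → F)) -
    (LinearMap.toSpanSingleton F (Fin m → F) c).comp (LinearMap.fst F F (Fin d → F))

theorem hom_apply {m : ℕ} (a : Fin m → (Fin d → F)) (c : Fin m → F) (w i) : hom a c w i = a i ⬝ᵥ w.2 - w.1 * c i := rfl

theorem hom_finrank {m : ℕ} (a : Fin m → (Fin d → F)) (c : Fin m → F) (ha : LinearIndependent F a) :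
    finrank F (LinearMap.ker (hom a c)) + m = d + 1 := by
  set f := (Matrix.of a).mulVecLin with hf
  have hr : finrank F (LinearMap.range f) = m := by
    have := LinearIndependent.rank_matrix (M := Matrix.of a) ha
    rw [Matrix.rank, Fintype.card_fin] at this
    exact this
  have hle : LinearMap.range f ≤ LinearMap.range (hom a c) := by
    rintro _ ⟨v, rfl⟩
    refine ⟨(0, v), ?_⟩
    funext i; rw [hom_apply]; simp [hf, Matrix.mulVec]
  have h1 := Submodule.finrank_mono hle
  have h3 := Submodule.finrank_le (LinearMap.range (hom a c))
  have h4 := LinearMap.finrank_range_add_finrank_ker (hom a c)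
  simp at h3 h4
  omega

def hatE (F : Type*) [Field F] (d : ℕ) : (Fin d → F) ↪ F × (Fin d → F) := ⟨fun p => (1, p), fun p p' h => congrArg Prod.snd h⟩

theorem mem_hat {P : Finset (Fin d → F)} {w : F × (Fin d → F)} : w ∈ P.map (hatE F d) ↔ w.1 = 1 ∧ w.2 ∈ P := by
  rw [Finset.mem_map]
  constructor
  · rintro ⟨p, hp, rfl⟩; exact ⟨rfl, hp⟩
  · rintro ⟨h1, h2⟩; exact ⟨w.2, h2, Prod.ext h1.symm rfl⟩

theorem Bt_hat (t : F) {P : Finset (Fin d → F)} {w w' : F × (Fin d → F)} (h : w ∈ P.map (hatE F d)) (h' : w' ∈ P.map (hatE F d)) :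
    Bt d t w w' = 0 ↔ w.2 ⬝ᵥ w'.2 = t := by
  rw [Bt_apply, (mem_hat.1 h).1, (mem_hat.1 h').1, mul_one, mul_one, sub_eq_zero]

theorem adjU_hat (t : F) (P : Finset (Fin d → F)) : adjU (Bt d t) (P.map (hatE F d)) = adjP t P := by
  classical
  rw [adjU, adjP]
  refine Finset.card_bij (fun p _ => (p.1.2, p.2.2)) ?_ ?_ ?_
  · rintro ⟨x, y⟩ h
    rw [Finset.mem_filter, Finset.mem_offDiag] at h ⊢
    obtain ⟨⟨hx, hy, hne⟩, h⟩ := h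
    refine ⟨⟨(mem_hat.1 hx).2, (mem_hat.1 hy).2, fun e => hne ?_⟩, (Bt_hat t hx hy).1 h⟩
    exact Prod.ext ((mem_hat.1 hx).1.trans (mem_hat.1 hy).1.symm) e
  · rintro ⟨⟨x0, x⟩, ⟨y0, y⟩⟩ h ⟨⟨x0', x'⟩, ⟨y0', y'⟩⟩ h' e
    rw [Finset.mem_filter, Finset.mem_offDiag, mem_hat, mem_hat] at h h'
    have e1 := h.1.1.1
    have e2 := h.1.2.1.1
    have e3 := h'.1.1.1
    have e4 := h'.1.2.1.1
    simp at e1 e2 e3 e4 e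
    rw [e1, e2, e3, e4, e.1, e.2]
  · rintro ⟨x, y⟩ h
    rw [Finset.mem_filter, Finset.mem_offDiag] at h
    obtain ⟨⟨hx, hy, hne⟩, h⟩ := h
    have hx' : ((1:F), x) ∈ P.map (hatE F d) := mem_hat.2 ⟨rfl, hx⟩
    have hy' : ((1:F), y) ∈ P.map (hatE F d) := mem_hat.2 ⟨rfl, hy⟩
    refine ⟨((1, x), (1, y)), ?_, rfl⟩
    rw [Finset.mem_filter, Finset.mem_offDiag]
    exact ⟨⟨hx', hy', fun e => hne (congrArg Prod.snd e)⟩, (Bt_hat t hx' hy').2 h⟩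

variable (n : Fin d → F) (ν t : F)
variable (h2 : (2:F) ≠ 0) (hn : n ≠ 0) (hnn : n ⬝ᵥ n = 2 * ν) (ht : t ≠ 0) (P : Finset (Fin d → F))
  (hP : ∀ p ∈ P, n ⬝ᵥ p = ν ∧ p ⬝ᵥ p = t)

include hP in
theorem hat_σ : ∀ w ∈ P.map (hatE F d), LinearMap.fst F F (Fin d → F) w = 1 := fun w hw => (mem_hat.1 hw).1
include hP in
theorem hat_Q : ∀ w ∈ P.map (hatE F d), Bt d t w w = 0 := fun w hw => (Bt_hat t hw hw).2 (hP _ (mem_hat.1 hw).2).2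

open Classical in
include h2 ht hP in
theorem nb2 (hd : d = 5) {p : Fin d → F} (hp : p ∈ P) (hli : LinearIndependent F ![n, p]) :
    (P.filter fun v => p ⬝ᵥ v = t).card ≤ 2 * Fintype.card F ^ 2 := by
  set S := LinearMap.ker (hom ![n, p] ![ν, t]) with hS
  have hfr : finrank F S = 4 := by
    have := hom_finrank ![n, p] ![ν, t] hli
    rw [← hS] at this; omega
  have hmem : ∀ v ∈ P, p ⬝ᵥ v = t → ((1:F), v) ∈ S := by
    intro v hv hpv
    rw [hS, LinearMap.mem_ker]
    funext i
    rw [hom_apply]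
    fin_cases i
    · simp [(hP v hv).1]
    · simp [hpv]
  have h := cnt_noiso2 (LinearMap.fst F F (Fin d → F)) (Bt d t) (Bt_symm t) (P.map (hatE F d)) (hat_σ n ν t P hP) (hat_Q n ν t P hP) h2
    (noiso h2 t ht) S (1, p) (hmem p hp (hP p hp).2) (mem_hat.2 ⟨rfl, hp⟩) (by rw [hfr]; omega)
  rw [hfr] at h
  have hle : (P.filter fun v => p ⬝ᵥ v = t).card ≤ cnt (P.map (hatE F d)) S := by
    rw [cnt, ← Finset.card_map (hatE F d)]
    refine Finset.card_le_card ?_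
    intro w hw
    rw [mem_hat, Finset.mem_filter] at hw
    rw [Finset.mem_filter]
    refine ⟨mem_hat.2 ⟨hw.1, hw.2.1⟩, ?_⟩
    have := hmem _ hw.2.1 hw.2.2
    rw [← hw.1] at this; exact this
  have hq : 0 < Fintype.card F ^ 2 := pow_pos Fintype.card_pos 2
  refine hle.trans (Nat.le_of_mul_le_mul_left (h.trans (le_of_eq ?_)) hq)
  ring

include h2 hn hnn ht hP in
theorem T5 (hd : d = 5) : (Tset (Bt d t) (P.map (hatE F d))).card ≤
    adjP t P * Fintype.card F ^ 2 + P.card * (Fintype.card F + 1) * Fintype.card F ^ 2 := by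
  classical
  set U := P.offDiag.filter fun p => p.1 ⬝ᵥ p.2 = t with hU
  set q := Fintype.card F with hq
  have h1 : (Tset (Bt d t) (P.map (hatE F d))).card ≤
      (U.sigma fun p => P.filter fun v => p.1 ⬝ᵥ v = t ∧ p.2 ⬝ᵥ v = t).card := by
    refine Finset.card_le_card_of_injOn (fun x => ⟨((x 0).2, (x 1).2), (x 2).2⟩) ?_ ?_
    · intro x hx
      rw [Finset.mem_coe, Tset, Finset.mem_filter, mem_IndSet] at hx
      obtain ⟨⟨hK, hli⟩, b1, b2, b3⟩ := hx
      rw [Bt_hat t (hK _) (hK _)] at b1 b2 b3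
      simp only [Finset.mem_coe, Finset.mem_sigma, hU, Finset.mem_filter, Finset.mem_offDiag]
      refine ⟨⟨⟨(mem_hat.1 (hK 0)).2, (mem_hat.1 (hK 1)).2, fun e => ?_⟩, b1⟩, (mem_hat.1 (hK 2)).2, b2, b3⟩
      have : x 0 = x 1 := Prod.ext ((mem_hat.1 (hK 0)).1.trans (mem_hat.1 (hK 1)).1.symm) e
      exact absurd (hli.injective this) (by decide)
    · intro x hx x' hx' e
      rw [Finset.mem_coe, Tset, Finset.mem_filter, mem_IndSet] at hx hx'
      simp at e
      obtain ⟨⟨e0, e1⟩, e2⟩ := e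
      funext i
      refine Prod.ext ((mem_hat.1 (hx.1.1 i)).1.trans (mem_hat.1 (hx'.1.1 i)).1.symm) ?_
      fin_cases i
      · exact e0
      · exact e1
      · exact e2
  refine h1.trans ?_
  rw [Finset.card_sigma]
  have h3 : ∀ p ∈ U, (P.filter fun v => p.1 ⬝ᵥ v = t ∧ p.2 ⬝ᵥ v = t).card ≤
      q^2 + if ¬ LinearIndependent F ![n, p.1, p.2] then q^2 else 0 := by
    rintro ⟨x, y⟩ hxy
    simp only [hU, Finset.mem_filter, Finset.mem_offDiag] at hxy
    obtain ⟨⟨hx, hy, hne⟩, hxy⟩ := hxy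
    by_cases hl : LinearIndependent F ![n, x, y]
    · rw [if_neg (not_not.2 hl), add_zero, hq, ← cnt_T3 n ν t (e := 2) hd hl]
      refine Finset.card_le_card ?_
      intro v hv
      rw [Finset.mem_filter] at hv ⊢
      exact ⟨Finset.mem_univ _, (hP v hv.1).1, hv.2⟩
    · rw [if_pos hl, ← two_mul]
      by_cases hlx : LinearIndependent F ![n, x]
      · refine le_trans (Finset.card_le_card ?_) (nb2 n ν t h2 ht P hP hd hx hlx)
        exact Finset.monotone_filter_right _ fun v _ hv => hv.1
      · have hly : LinearIndependent F ![n, y] := by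
          by_contra hly
          exact hne ((apex n ν t h2 hn hnn ht (hP x hx).1 (hP x hx).2 hlx).1.trans
            (apex n ν t h2 hn hnn ht (hP y hy).1 (hP y hy).2 hly).1.symm)
        refine le_trans (Finset.card_le_card ?_) (nb2 n ν t h2 ht P hP hd hy hly)
        exact Finset.monotone_filter_right _ fun v _ hv => hv.2
  refine (Finset.sum_le_sum h3).trans ?_
  rw [Finset.sum_add_distrib, Finset.sum_const, smul_eq_mul, ← Finset.sum_filter, Finset.sum_const, smul_eq_mul]
  have hUc : U.card = adjP t P := by rw [adjP]
  rw [hUc]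
  refine Nat.add_le_add_left (Nat.mul_le_mul_right _ ?_) _
  have h4 := rel_bound n ν t h2 hn hnn ht P hP (fun p p' => p ⬝ᵥ p' = t ∧ ¬ LinearIndependent F ![n, p, p']) (by
    intro p hp hli
    refine le_trans (Nat.add_le_add_right (Finset.card_le_card ?_) 1) (line_card' p (n - (ν/t) • p) P hp)
    intro p' hp'
    simp only [Finset.mem_filter] at hp' ⊢
    obtain ⟨hp', hne, hpp, hl⟩ := hp'
    exact ⟨hp', hne, on_line n ν t ht hli hl (hP p hp).1 (hP p hp).2 ((dotProduct_comm _ _).trans hpp)⟩)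
  rw [hU, Finset.filter_filter]
  refine le_trans (le_of_eq ?_) (h4.trans (Nat.mul_le_mul_left _ (Nat.le_succ _)))
  congr
end
end ADT

namespace ADT
open Module Matrix
set_option linter.unusedVariables false
set_option linter.unusedSectionVars false

section
variable {F : Type*} [Field F] [Fintype F] {d : ℕ}

theorem aff_iff {m : ℕ} (x : Fin m → (Fin d → F)) :
    LinearIndependent F (fun i => hatE F d (x i)) ↔ AffineIndependent F x := by
  rw [Fintype.linearIndependent_iff, affineIndependent_iff_of_fintype]
  refine forall_congr' fun g => ?_
  have e1 : ∑ i, g i • hatE F d (x i) = (∑ i, g i, ∑ i, g i • x i) := by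
    refine Prod.ext ?_ ?_
    · rw [Prod.fst_sum]; exact Finset.sum_congr rfl fun i _ => mul_one (g i)
    · rw [Prod.snd_sum]; rfl
  rw [e1, Prod.mk_eq_zero, and_imp]
  refine forall_congr' fun hg => ?_
  rw [Finset.weightedVSub_eq_linear_combination _ hg]

open Classical in
noncomputable def Nset (P : Finset (Fin d → F)) : Finset (Fin d → (Fin d → F)) :=
  (Fintype.piFinset fun _ : Fin d => P).filter fun x => Function.Injective x ∧ ¬ AffineIndependent F x

theorem mem_Nset {P : Finset (Fin d → F)} {x : Fin d → (Fin d → F)} :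
    x ∈ Nset P ↔ (∀ i, x i ∈ P) ∧ Function.Injective x ∧ ¬ AffineIndependent F x := by
  classical
  rw [Nset, Finset.mem_filter, Fintype.mem_piFinset]

theorem Nset_add (P : Finset (Fin d → F)) :
    (Nset P).card + (IndSet F (P.map (hatE F d)) d).card ≤ P.card.descFactorial d := by
  classical
  have h1 : (IndSet F (P.map (hatE F d)) d).card ≤
      ((Fintype.piFinset fun _ : Fin d => P).filter fun x => AffineIndependent F x).card := by
    refine Finset.card_le_card_of_injOn (fun x i => (x i).2) ?_ ?_
    · intro x hx
      rw [Finset.mem_coe, mem_IndSet] at hx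
      rw [Finset.mem_coe, Finset.mem_filter, Fintype.mem_piFinset]
      refine ⟨fun i => (mem_hat.1 (hx.1 i)).2, ?_⟩
      rw [← aff_iff]
      have e : (fun i => hatE F d (x i).2) = x := funext fun i => Prod.ext (mem_hat.1 (hx.1 i)).1.symm rfl
      rw [e]; exact hx.2
    · intro x hx x' hx' e
      rw [Finset.mem_coe, mem_IndSet] at hx hx'
      funext i
      exact Prod.ext ((mem_hat.1 (hx.1 i)).1.trans (mem_hat.1 (hx'.1 i)).1.symm) (congrFun e i)
  refine (Nat.add_le_add_left h1 _).trans ?_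
  rw [← Finset.card_union_of_disjoint]
  · have : P.card.descFactorial d = Fintype.card (Fin d ↪ P) := by
      rw [Fintype.card_embedding_eq]; simp
    rw [this, ← Finset.card_univ]
    have hinj : ∀ x ∈ Nset P ∪ ((Fintype.piFinset fun _ : Fin d => P).filter fun x => AffineIndependent F x),
        (∀ i, x i ∈ P) ∧ Function.Injective x := by
      intro x hx
      rw [Finset.mem_union, mem_Nset, Finset.mem_filter, Fintype.mem_piFinset] at hx
      rcases hx with hx | hx
      · exact ⟨hx.1, hx.2.1⟩
      · exact ⟨hx.1, hx.2.injective⟩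
    refine Finset.card_le_card_of_surjOn (fun f i => (f i : Fin d → F)) ?_
    intro x hx
    obtain ⟨a, b⟩ := hinj x hx
    exact ⟨⟨fun i => ⟨x i, a i⟩, fun i j h => b (congrArg Subtype.val h)⟩, Finset.mem_coe.2 (Finset.mem_univ _), rfl⟩
  · rw [Finset.disjoint_left]
    intro x hx hx'
    exact (mem_Nset.1 hx).2.2 (Finset.mem_filter.1 hx').2

theorem core (n : Fin d → F) (ν t : F)
    (h2 : (2:F) ≠ 0) (h3 : 3 ≤ Fintype.card F) (hn : n ≠ 0) (hnn : n ⬝ᵥ n = 2 * ν) (ht : t ≠ 0) (P : Finset (Fin d → F))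
    (hP : ∀ p ∈ P, n ⬝ᵥ p = ν ∧ p ⬝ᵥ p = t) (hd : 4 ≤ d) :
    (Nset P).card ≤ P.card ^ (d-1) * (2 * Fintype.card F ^ (d-3)) := by
  have hadd := Nset_add P
  by_cases hk : P.card ≤ 2 * Fintype.card F ^ (d-3)
  · have h1 : (Nset P).card ≤ P.card ^ d :=
      (Nat.le_add_right _ _).trans (hadd.trans (Nat.descFactorial_le_pow _ _))
    refine h1.trans ?_
    calc P.card ^ d = P.card ^ (d-1) * P.card := by rw [← pow_succ]; congr 1; omega
      _ ≤ _ := Nat.mul_le_mul_left _ hk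
  push Not at hk
  have hadd' : ((Nset P).card : ℝ) + (IndSet F (P.map (hatE F d)) d).card ≤ P.card.descFactorial d := by exact_mod_cast hadd
  have hσ := hat_σ n ν t P hP
  have hQ := hat_Q n ν t P hP
  have hc : (P.map (hatE F d)).card = P.card := Finset.card_map _
  have goal : ((Nset P).card : ℝ) ≤ (P.card:ℝ) ^ (d-1) * (2 * (Fintype.card F:ℝ) ^ (d-3)) := by
    by_cases h4 : d = 4
    · have hk' : 2 * Fintype.card F < P.card := by
        have e : d - 3 = 1 := by omega
        rwa [e, pow_one] at hk
      have hU := U4 n ν t h2 hn hnn ht P hP h4 hk'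
      subst h4
      have h := case4 (LinearMap.fst F F (Fin 4 → F)) (Bt 4 t) (Bt_symm t) (P.map (hatE F 4)) hσ hQ h2 h3 (noiso h2 t ht)
        (by rw [hc]; exact hk') (by rw [hc, adjU_hat]; exact hU)
      rw [hc] at h
      have : ((P.card.descFactorial 4 : ℕ) : ℝ) = (P.card:ℝ)*(P.card-1)*(P.card-2)*(P.card-3) := by
        simp only [Nat.descFactorial_succ, Nat.descFactorial_zero, Nat.sub_zero]
        rw [Nat.cast_mul, Nat.cast_mul, Nat.cast_mul, Nat.cast_mul, Nat.cast_sub (by omega), Nat.cast_sub (by omega), Nat.cast_sub (by omega)]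
        push_cast; ring
      rw [this] at hadd'
      norm_num
      linarith
    by_cases h5 : d = 5
    · have hk' : 2 * Fintype.card F ^ 2 < P.card := by
        have e : d - 3 = 2 := by omega
        rwa [e] at hk
      have hU := U5 n ν t h2 hn hnn ht P hP h5
      have hT := T5 n ν t h2 hn hnn ht P hP h5
      subst h5
      have h := case5 (LinearMap.fst F F (Fin 5 → F)) (Bt 5 t) (Bt_symm t) (P.map (hatE F 5)) hσ hQ h2 h3 (noiso h2 t ht)
        (by rw [hc]; exact hk') (by rw [hc, adjU_hat]; exact hU) (by rw [hc, adjU_hat]; exact_mod_cast hT)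
      rw [hc] at h
      have : 4 ≤ P.card := by nlinarith
      have : ((P.card.descFactorial 5 : ℕ) : ℝ) = (P.card:ℝ)*(P.card-1)*(P.card-2)*(P.card-3)*(P.card-4) := by
        simp only [Nat.descFactorial_succ, Nat.descFactorial_zero, Nat.sub_zero]
        rw [Nat.cast_mul, Nat.cast_mul, Nat.cast_mul, Nat.cast_mul, Nat.cast_mul, Nat.cast_sub (by omega), Nat.cast_sub (by omega), Nat.cast_sub (by omega), Nat.cast_sub (by omega)]
        push_cast; ring
      rw [this] at hadd'
      norm_num
      linarith
    · obtain ⟨e, rfl⟩ : ∃ e, d = e + 4 := ⟨d - 4, by omega⟩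
      have hk' : 2 * Fintype.card F ^ (e+1) < P.card := hk
      have h := caseG (LinearMap.fst F F (Fin (e+4) → F)) (Bt (e+4) t) (Bt_symm t) (P.map (hatE F (e+4))) hσ hQ h2 h3 e (by omega)
        (LinearMap.ker (hom ![n] ![ν])) (by
          intro w hw
          rw [LinearMap.mem_ker]
          funext i
          rw [hom_apply]
          have := mem_hat.1 hw
          fin_cases i
          simp [this.1, (hP _ this.2).1]) (by
          have := hom_finrank ![n] ![ν] (LinearIndependent.of_subsingleton 0 (by simpa using hn))
          omega) (noiso h2 t ht) (by rw [hc]; exact hk')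
      rw [hc] at h
      have : ((P.card.descFactorial (e+4) : ℕ) : ℝ) ≤ (P.card:ℝ)^(e+4) := by exact_mod_cast Nat.descFactorial_le_pow _ _
      have e1 : e + 4 - 1 = e + 3 := rfl
      have e2 : e + 4 - 3 = e + 1 := rfl
      rw [e1, e2]
      linarith
  exact_mod_cast goal
end
end ADT

theorem affinely_dependent_tuple_count
    {q d : ℕ} (F : Type*) [Field F] [Fintype F]
    (hcard : Fintype.card F = q) (hq : Odd q)
    (hd : 4 ≤ d) (t : F) (ht : t ≠ 0)
    (E : Set (Fin d → F)) (y z : Fin d → F)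
    (hyE : y ∈ E) (hzE : z ∈ E) (hyz : y ≠ z) :
    Set.ncard {x : Fin d → (Fin d → F) |
        (∀ i, x i ∈ E ∧ ∑ j, (x i j - y j) ^ 2 = t ∧ ∑ j, (x i j - z j) ^ 2 = t) ∧
        Function.Injective x ∧ ¬ AffineIndependent F x}
      ≤ (Set.ncard {w : Fin d → F | w ∈ E ∧
            ∑ j, (w j - y j) ^ 2 = t ∧ ∑ j, (w j - z j) ^ 2 = t}) ^ (d - 1)
          * (2 * q ^ (d - 3)) := by
  classical
  subst hcard
  have h2 : (2:F) ≠ 0 := by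
    apply Ring.two_ne_zero
    intro h
    exact (Nat.not_even_iff_odd.2 hq) (FiniteField.even_card_iff_char_two.1 h |> Nat.even_iff.2)
  have h3 : 3 ≤ Fintype.card F := by
    have := Fintype.one_lt_card (α := F)
    obtain ⟨m, hm⟩ := hq
    omega
  set n := z - y with hn
  set ν := (2:F)⁻¹ * (n ⬝ᵥ n) with hν
  have hnn : n ⬝ᵥ n = 2 * ν := by rw [hν, mul_inv_cancel_left₀ h2]
  set P : Finset (Fin d → F) := Finset.univ.filter fun p => y + p ∈ E ∧ n ⬝ᵥ p = ν ∧ p ⬝ᵥ p = t with hPdef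
  have hmem : ∀ p, p ∈ P ↔ (y + p ∈ E ∧ ∑ j, ((y + p) j - y j)^2 = t ∧ ∑ j, ((y + p) j - z j)^2 = t) := by
    intro p
    rw [hPdef, Finset.mem_filter]
    have e1 : ∑ j, ((y + p) j - y j)^2 = p ⬝ᵥ p := by
      rw [dotProduct]
      exact Finset.sum_congr rfl fun j _ => by simp [sq]
    have e2 : ∑ j, ((y + p) j - z j)^2 = p ⬝ᵥ p - 2 * (n ⬝ᵥ p) + n ⬝ᵥ n := by
      simp only [dotProduct]
      rw [Finset.mul_sum, ← Finset.sum_sub_distrib, ← Finset.sum_add_distrib]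
      exact Finset.sum_congr rfl fun j _ => by simp [hn]; ring
    rw [e1, e2, hnn]
    constructor
    · rintro ⟨_, a, b, c⟩
      exact ⟨a, c, by rw [b, c]; ring⟩
    · rintro ⟨a, c, b⟩
      refine ⟨Finset.mem_univ _, a, ?_, c⟩
      rw [c] at b
      exact mul_left_cancel₀ h2 (by linear_combination -b)
  have hinj : Function.Injective fun p : Fin d → F => y + p := add_right_injective y
  have k1 : Set.ncard {w : Fin d → F | w ∈ E ∧ ∑ j, (w j - y j) ^ 2 = t ∧ ∑ j, (w j - z j) ^ 2 = t} = P.card := by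
    rw [← Set.ncard_coe_finset P, ← Set.ncard_image_of_injective (P : Set (Fin d → F)) hinj]
    congr 1
    ext w
    constructor
    · intro hw
      refine ⟨w - y, ?_, by simp⟩
      rw [Finset.mem_coe, hmem, add_sub_cancel]
      exact hw
    · rintro ⟨p, hp, rfl⟩
      exact (hmem p).1 (Finset.mem_coe.1 hp)
  have k2 : Set.ncard {x : Fin d → (Fin d → F) |
        (∀ i, x i ∈ E ∧ ∑ j, (x i j - y j) ^ 2 = t ∧ ∑ j, (x i j - z j) ^ 2 = t) ∧
        Function.Injective x ∧ ¬ AffineIndependent F x} ≤ (ADT.Nset P).card := by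
    rw [← Set.ncard_coe_finset (ADT.Nset P)]
    refine (Set.ncard_le_ncard (t := (fun (x : Fin d → (Fin d → F)) i => y + x i) '' (ADT.Nset P : Set (Fin d → (Fin d → F)))) ?_ (Set.toFinite _)).trans
      (Set.ncard_image_le (Set.toFinite _))
    rintro x ⟨hx, hxi, hxa⟩
    have ex : x = fun i => y + (x i - y) := by funext i; simp
    refine ⟨fun i => x i - y, ?_, ex.symm⟩
    rw [Finset.mem_coe, ADT.mem_Nset]
    refine ⟨fun i => ?_, fun i j h => hxi (sub_left_injective h), fun h => hxa ?_⟩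
    · rw [hmem, add_sub_cancel]; exact hx i
    · rw [← (AffineEquiv.constVAdd F (Fin d → F) y).affineIndependent_iff] at h
      rw [ex]; exact h
  rw [k1]
  refine k2.trans (ADT.core n ν t h2 h3 (sub_ne_zero.2 hyz.symm) hnn ht P (fun p hp => ?_) hd)
  exact (Finset.mem_filter.1 hp).2.2
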